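/- arXiv:1607.02334 — 2 statements merged into one kernel-verified Lean document; each statement's English description precedes it below -/
import Mathlib

section
/- Let n ≥ 3 and let T_n be the scale-free random recursive tree on vertex set {1,…,n}. For all vertices v, w with 1 ≤ v < w ≤ n and every integer k with 2 ≤ k < n, the expected k-betweenness centrality of v strictly exceeds that of w: E[BC_k(v)] > E[BC_k(w)], where the expectation is over the random parent function f with probability P_n(f). -/
open scoped Classical

noncomputable section

/-- A valid parent function for a recursive tree on vertices `1, …, n` (encoded on
`Fin (n+1)`, where the index `0` is unused): `f t < t` and `f t ≥ 1` for `2 ≤ t ≤ n`,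
and `f` is fixed to `0` outside its domain. -/
def ValidPF (n : ℕ) (f : Fin (n+1) → Fin (n+1)) : Prop :=
  (∀ t : Fin (n+1), t.val < 2 → (f t).val = 0) ∧
  (∀ t : Fin (n+1), 2 ≤ t.val → 1 ≤ (f t).val ∧ (f t).val < t.val)

/-- `degPF n f m v` : the degree `d_f(m, v) = 1 + #{s : 2 ≤ s ≤ m, f s = v}` of vertex
`v` in the tree on `{1, …, m}` (including the virtual edge at vertex 1). -/
def degPF (n : ℕ) (f : Fin (n+1) → Fin (n+1)) (m : ℕ) (v : Fin (n+1)) : ℕ :=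
  1 + (Finset.univ.filter (fun s : Fin (n+1) => 2 ≤ s.val ∧ s.val ≤ m ∧ f s = v)).card

/-- The probability `P_n(f) = ∏_{t=2}^{n} d_f(t-1, f t) / (2t - 3)` of the parent
function `f` under the scale-free (preferential attachment) random tree model. -/
def probPF (n : ℕ) (f : Fin (n+1) → Fin (n+1)) : ℚ :=
  ∏ t ∈ Finset.univ.filter (fun t : Fin (n+1) => 2 ≤ t.val),
    (degPF n f (t.val - 1) (f t) : ℚ) / (2 * (t.val : ℚ) - 3)

/-- The recursive tree `T_n^f` with edge set `{{t, f t} : 2 ≤ t ≤ n}` determined by a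
parent function `f`. -/
def treeGraphPF (n : ℕ) (f : Fin (n+1) → Fin (n+1)) : SimpleGraph (Fin (n+1)) :=
  SimpleGraph.fromRel (fun s t => 2 ≤ t.val ∧ f t = s)

/-- `v` is an interior vertex of the `s`–`t` path: `v ≠ s`, `v ≠ t`, and
`dist s v + dist v t = dist s t`. -/
def IsInterior {V : Type*} (G : SimpleGraph V) (v s t : V) : Prop :=
  v ≠ s ∧ v ≠ t ∧ G.dist s v + G.dist v t = G.dist s t

/-- `PvPF n f k v` : the number of unordered pairs `{s,t}` with `2 ≤ dist s t ≤ k` such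
that `v` is an interior vertex of the `s`–`t` path in `T_n^f` (ordered pairs over two). -/
def PvPF (n : ℕ) (f : Fin (n+1) → Fin (n+1)) (k : ℕ) (v : Fin (n+1)) : ℕ :=
  (Finset.univ.filter (fun p : Fin (n+1) × Fin (n+1) =>
    2 ≤ (treeGraphPF n f).dist p.1 p.2 ∧ (treeGraphPF n f).dist p.1 p.2 ≤ k ∧
      IsInterior (treeGraphPF n f) v p.1 p.2)).card / 2

/-- `PtotPF n f k` : the number of unordered pairs `{s,t}` with `2 ≤ dist s t ≤ k`
in `T_n^f` (ordered pairs over two). -/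
def PtotPF (n : ℕ) (f : Fin (n+1) → Fin (n+1)) (k : ℕ) : ℕ :=
  (Finset.univ.filter (fun p : Fin (n+1) × Fin (n+1) =>
    2 ≤ (treeGraphPF n f).dist p.1 p.2 ∧ (treeGraphPF n f).dist p.1 p.2 ≤ k)).card / 2

/-- The normalized `k`-betweenness centrality of `v` in `T_n^f`. -/
def BCPF (n : ℕ) (f : Fin (n+1) → Fin (n+1)) (k : ℕ) (v : Fin (n+1)) : ℚ :=
  (PvPF n f k v : ℚ) / (PtotPF n f k : ℚ)

set_option linter.unusedSectionVars false
set_option linter.unusedVariables false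
/-! ### abstract metric part -/

def IntM {V : Type*} (d : V → V → ℕ) (v s t : V) : Prop := v ≠ s ∧ v ≠ t ∧ d s v + d v t = d s t

def TS {V : Type*} [Fintype V] (d : V → V → ℕ) (k : ℕ) : Finset (V × V) :=
  Finset.univ.filter (fun p => 2 ≤ d p.1 p.2 ∧ d p.1 p.2 ≤ k)

def IS {V : Type*} [Fintype V] (d : V → V → ℕ) (k : ℕ) (v : V) : Finset (V × V) :=
  (TS d k).filter (fun p => IntM d v p.1 p.2)

def QS {V : Type*} [Fintype V] (d : V → V → ℕ) (k : ℕ) (v w : V) : Finset (V × V) :=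
  (TS d k).filter (fun p => IntM d v p.1 p.2 ∧ ¬ IntM d w p.1 p.2)

structure Half {V : Type*} (d : V → V → ℕ) (C : V → Prop) (v w z : V) : Prop where
  symm : ∀ s t, d s t = d t s
  self : ∀ s, d s s = 0
  zero : ∀ s, d s z = 0
  pos : ∀ s t, s ≠ z → t ≠ z → s ≠ t → 1 ≤ d s t
  hvw : d v w = 1
  tri : ∀ s t, C s → C t → d s t ≤ d s v + d v t
  f3 : ∀ c x, C c → ¬ C x → x ≠ z → d c x = d c v + d v x
  cz : ¬ C z
  cv : ¬ C v
  cw : ¬ C w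
  vz : v ≠ z
  wz : w ≠ z

structure Rel2 {V : Type*} [DecidableEq V] (d d' : V → V → ℕ) (C : V → Prop) (v w : V) : Prop where
  f1 : ∀ s t, ¬ C s → ¬ C t → d' (Equiv.swap v w s) (Equiv.swap v w t) = d s t
  f2 : ∀ s t, C s → C t → d' s t = d s t
  f2v : ∀ s, C s → d' s v = d s v

lemma Rel2.symm {V : Type*} [DecidableEq V] {d d' : V → V → ℕ} {C : V → Prop} {v w : V} (cv : ¬ C v) (cw : ¬ C w)
    (h : Rel2 d d' C v w) : Rel2 d' d C v w := by
  refine ⟨fun s t hs ht => ?_, fun s t hs ht => (h.f2 s t hs ht).symm, fun s hs => (h.f2v s hs).symm⟩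
  have key : ∀ s, ¬ C s → ¬ C (Equiv.swap v w s) := by
    intro s hs
    rw [Equiv.swap_apply_def]; split_ifs <;> assumption
  rw [← h.f1 _ _ (key s hs) (key t ht)]; simp

lemma swap_notC {V : Type*} [DecidableEq V] {C : V → Prop} {v w : V} (cv : ¬ C v) (cw : ¬ C w) (s : V)
   (hs : ¬ C s) : ¬ C (Equiv.swap v w s) := by
  rw [Equiv.swap_apply_def]; split_ifs <;> assumption

section
variable {V : Type*} [Fintype V] [DecidableEq V] {d d' : V → V → ℕ} {C : V → Prop} {v w z : V} {k : ℕ}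

lemma RS_notC (h : Half d C v w z) {c t : V} (h2 : 2 ≤ d c t) (hc : C c)
    (hi : IntM d w c t) (hn : ¬ IntM d v c t) : False := by
  obtain ⟨h1, h3, h4⟩ := hi
  have e1 := h.f3 c w hc h.cw h.wz
  rw [h.hvw] at e1
  have hcv : v ≠ c := fun e => h.cv (e ▸ hc)
  by_cases ht : C t
  · have e2 := h.f3 t w ht h.cw h.wz
    rw [h.hvw] at e2
    have := h.tri c t hc ht
    have := h.symm t w
    have := h.symm t v
    omega
  · have htz : t ≠ z := by
      rintro rfl
      have := h.zero c; omega
    have e2 := h.f3 c t hc ht htz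
    by_cases hv : v = t
    · subst hv
      have := h.self v
      omega
    · exact hn ⟨hcv, hv, e2.symm⟩

lemma IntM_symm (h : Half d C v w z) {x s t : V} (hi : IntM d x s t) : IntM d x t s := by
  obtain ⟨h1, h3, h4⟩ := hi
  refine ⟨h3, h1, ?_⟩
  rw [h.symm t x, h.symm x s, h.symm t s]; omega

lemma IntM_swap {x s t : V} (h : Half d C v w z) (r : Rel2 d d' C v w) (hx : ¬ C x)
    (hs : ¬ C s) (ht : ¬ C t) :
    IntM d' (Equiv.swap v w x) (Equiv.swap v w s) (Equiv.swap v w t) ↔ IntM d x s t := by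
  unfold IntM
  rw [r.f1 _ _ hs hx, r.f1 _ _ hx ht, r.f1 _ _ hs ht]
  simp

lemma Q1_card (h : Half d C v w z) (h' : Half d' C v w z) (r : Rel2 d d' C v w) :
    ((QS d k v w).filter (fun p => ¬ (C p.1 ∨ C p.2))).card = (QS d' k w v).card := by
  have key : ∀ s, ¬ C s → ¬ C (Equiv.swap v w s) := swap_notC h.cv h.cw
  have r' := r.symm h.cv h.cw
  refine Finset.card_nbij' (fun p => (Equiv.swap v w p.1, Equiv.swap v w p.2))
    (fun p => (Equiv.swap v w p.1, Equiv.swap v w p.2)) ?_ ?_ ?_ ?_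
  · rintro ⟨s, t⟩ hp
    simp only [QS, TS, Finset.mem_filter, Finset.mem_univ, true_and, Finset.mem_coe, not_or] at hp ⊢
    obtain ⟨⟨⟨a, b⟩, c, e⟩, f, g⟩ := hp
    have i1 := IntM_swap h r h.cv f g
    have i2 := IntM_swap h r h.cw f g
    simp only [Equiv.swap_apply_left, Equiv.swap_apply_right] at i1 i2
    rw [r.f1 _ _ f g, i1, i2]
    exact ⟨⟨a, b⟩, c, e⟩
  · rintro ⟨s, t⟩ hp
    simp only [QS, TS, Finset.mem_filter, Finset.mem_univ, true_and, Finset.mem_coe, not_or] at hp ⊢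
    obtain ⟨⟨a, b⟩, c, e⟩ := hp
    have f : ¬ C s := fun hs => RS_notC h' a hs c e
    have g : ¬ C t := fun hs => RS_notC h' (by rw [h'.symm]; exact a) hs (IntM_symm h' c)
      (fun q => e (IntM_symm h' q))
    have i1 := IntM_swap h' r' h.cv f g
    have i2 := IntM_swap h' r' h.cw f g
    simp only [Equiv.swap_apply_left, Equiv.swap_apply_right] at i1 i2
    rw [r'.f1 _ _ f g, i1, i2]
    exact ⟨⟨⟨a, b⟩, c, e⟩, key _ f, key _ g⟩
  · rintro ⟨s, t⟩ hp; simp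
  · rintro ⟨s, t⟩ hp; simp

lemma cross_mem (h : Half d C v w z) (h' : Half d' C v w z) (r : Rel2 d d' C v w)
    {c x : V} (hc : C c) (hx : ¬ C x) (h2 : 2 ≤ d c x) (hk : d c x ≤ k) :
    (2 ≤ d' c x ∧ d' c x ≤ k) ∨ (IntM d v c x ∧ ¬ IntM d w c x) := by
  have hxz : x ≠ z := by
    rintro rfl
    have := h.zero c; omega
  have e := h.f3 c x hc hx hxz
  have e' := h'.f3 c x hc hx hxz
  have ev := r.f2v c hc
  have hcz : c ≠ z := fun q => h.cz (q ▸ hc)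
  have hcv : v ≠ c := fun q => h.cv (q ▸ hc)
  have p1 := h.pos c v hcz h.vz hcv.symm
  by_cases hv : x = v
  · subst hv; left; omega
  by_cases hw : x = w
  · subst hw; left
    have := h.hvw; have := h'.hvw; omega
  have f := r.f1 w x h.cw hx
  rw [Equiv.swap_apply_right, Equiv.swap_apply_of_ne_of_ne hv hw] at f
  have p2 := h.pos w x h.wz hxz (Ne.symm hw)
  by_cases hle : d w x ≤ d v x
  · left; omega
  · right
    refine ⟨⟨hcv, Ne.symm hv, e.symm⟩, ?_⟩
    rintro ⟨_, _, q⟩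
    have := h.f3 c w hc h.cw h.wz
    have := h.hvw
    omega

lemma T_le (h : Half d C v w z) (h' : Half d' C v w z) (r : Rel2 d d' C v w) :
    (TS d k).card ≤ (TS d' k).card + ((QS d k v w).filter (fun p => C p.1 ∨ C p.2)).card := by
  have key : ∀ s, ¬ C s → ¬ C (Equiv.swap v w s) := swap_notC h.cv h.cw
  set X := (QS d k v w).filter (fun p => C p.1 ∨ C p.2) with hX
  have h1 : (TS d k).card ≤ (TS d k \ X).card + X.card := by
    have := Finset.le_card_sdiff X (TS d k)
    omega
  refine h1.trans (Nat.add_le_add_right ?_ _)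
  refine Finset.card_le_card_of_injOn
    (fun p => if C p.1 ∨ C p.2 then p else (Equiv.swap v w p.1, Equiv.swap v w p.2)) ?_ ?_
  · rintro ⟨s, t⟩ hp
    simp only [hX, QS, TS, Finset.mem_filter, Finset.mem_univ, true_and, Finset.coe_sdiff, Set.mem_sdiff,
      Finset.mem_coe] at hp ⊢
    obtain ⟨⟨a, b⟩, c⟩ := hp
    by_cases hs : C s
    · simp only [hs, true_or, if_true, and_true] at c ⊢
      by_cases ht : C t
      · rw [r.f2 s t hs ht]; exact ⟨a, b⟩
      · rcases cross_mem h h' r hs ht a b with q | q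
        · exact q
        · exact absurd ⟨⟨a, b⟩, q⟩ c
    · by_cases ht : C t
      · simp only [ht, or_true, if_true, and_true] at c ⊢
        rcases cross_mem (k := k) h h' r ht hs (by rw [h.symm]; exact a) (by rw [h.symm]; exact b) with q | q
        · rw [h'.symm]; exact q
        · exact absurd ⟨⟨a, b⟩, IntM_symm h q.1, fun y => q.2 (IntM_symm h y)⟩ c
      · simp only [hs, ht, or_self, if_false]
        rw [r.f1 s t hs ht]; exact ⟨a, b⟩
  · rintro ⟨s, t⟩ _ ⟨s', t'⟩ _ he
    dsimp only at he
    split_ifs at he with q1 q2 q2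
    · exact he
    · rw [Prod.mk.injEq] at he
      rw [not_or] at q2
      rw [he.1, he.2] at q1
      exact absurd q1 (by rw [not_or]; exact ⟨key _ q2.1, key _ q2.2⟩)
    · rw [Prod.mk.injEq] at he
      rw [not_or] at q1
      rw [← he.1, ← he.2] at q2
      exact absurd q2 (by rw [not_or]; exact ⟨key _ q1.1, key _ q1.2⟩)
    · simpa using he

lemma IS_diff : (IS d k v).card + (QS d k w v).card = (IS d k w).card + (QS d k v w).card := by
  have e1 : (IS d k v).card = ((IS d k v).filter (fun p => IntM d w p.1 p.2)).card + (QS d k v w).card := by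
    rw [← Finset.card_filter_add_card_filter_not (s := IS d k v) (fun p => IntM d w p.1 p.2)]
    congr 2
    ext p; simp [IS, QS, and_assoc]
  have e2 : (IS d k w).card = ((IS d k w).filter (fun p => IntM d v p.1 p.2)).card + (QS d k w v).card := by
    rw [← Finset.card_filter_add_card_filter_not (s := IS d k w) (fun p => IntM d v p.1 p.2)]
    congr 2
    ext p; simp [IS, QS, and_assoc]
  have e3 : (IS d k v).filter (fun p => IntM d w p.1 p.2) = (IS d k w).filter (fun p => IntM d v p.1 p.2) := by
    ext p; simp only [IS, Finset.mem_filter]; tauto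
  rw [e1, e2, e3]; ring

def BCM {V : Type*} [Fintype V] (d : V → V → ℕ) (k : ℕ) (v : V) : ℚ :=
  ((IS d k v).card : ℚ) / ((TS d k).card : ℚ)

lemma arith {T T' R R' Q Q' : ℚ} (hT : 0 ≤ T) (hT' : 0 ≤ T') (hR : 0 ≤ R) (hR' : 0 ≤ R')
    (hQ : 0 ≤ Q) (hQ' : 0 ≤ Q') (r : R ≤ T) (r' : R' ≤ T') (q : Q ≤ T) (q' : Q' ≤ T')
    (t : T ≤ T' + Q) (t' : T' ≤ T + Q') :
    0 ≤ (R' + Q - R) / T + (R + Q' - R') / T' ∧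
    (0 < Q → 0 < Q' → 0 < (R' + Q - R) / T + (R + Q' - R') / T') := by
  rcases hT.eq_or_lt with e | e
  · subst e
    have : R = 0 := le_antisymm r hR
    subst this
    refine ⟨?_, fun a => absurd q (not_le.2 a)⟩
    simp only [div_zero, zero_add]
    apply div_nonneg _ hT'
    linarith
  rcases hT'.eq_or_lt with e' | e'
  · subst e'
    have : R' = 0 := le_antisymm r' hR'
    subst this
    refine ⟨?_, fun _ a => absurd q' (not_le.2 a)⟩
    simp only [div_zero, add_zero]
    apply div_nonneg _ hT
    linarith
  have key : (R' + Q - R) / T + (R + Q' - R') / T' =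
     ((R' - R) * (T' - T) + T' * Q + T * Q') / (T * T') := by
    field_simp; ring
  rw [key]
  have m1 := mul_nonneg hT' hQ
  have m2 := mul_nonneg hT hQ'
  have main : (R' - R) * (T' - T) + T' * Q ≥ 0 ∨ (R' - R) * (T' - T) + T * Q' ≥ 0 := by
    rcases le_total R R' with a | a <;> rcases le_total T T' with b | b
    · left; nlinarith [mul_nonneg (sub_nonneg.2 a) (sub_nonneg.2 b)]
    · left
      have : (R' - R) * (T - T') ≤ T' * Q :=
        mul_le_mul (by linarith) (by linarith) (by linarith) hT'
      linarith
    · right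
      have : (R - R') * (T' - T) ≤ T * Q' :=
        mul_le_mul (by linarith) (by linarith) (by linarith) hT
      linarith
    · left; nlinarith [mul_nonneg (sub_nonneg.2 a) (sub_nonneg.2 b)]
  constructor
  · apply div_nonneg _ (by positivity)
    rcases main with g | g <;> linarith
  · intro a a'
    apply div_pos _ (by positivity)
    have := mul_pos e' a
    have := mul_pos e a'
    rcases main with g | g <;> linarith

lemma BCM_pair (h : Half d C v w z) (h' : Half d' C v w z) (r : Rel2 d d' C v w) :
    0 ≤ (BCM d k v - BCM d k w) + (BCM d' k v - BCM d' k w) ∧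
    (2 ≤ k → (∃ c, C c ∧ d c v = 1) → 0 < (BCM d k v - BCM d k w) + (BCM d' k v - BCM d' k w)) := by
  have r' := r.symm h.cv h.cw
  have a1 := Q1_card (k := k) h h' r
  have a2 := Q1_card (k := k) h' h r'
  have b1 := T_le (k := k) h h' r
  have b2 := T_le (k := k) h' h r'
  have c1 := IS_diff (d := d) (k := k) (v := v) (w := w)
  have c2 := IS_diff (d := d') (k := k) (v := v) (w := w)
  have s1 := Finset.card_filter_add_card_filter_not (s := QS d k v w) (fun p => C p.1 ∨ C p.2)
  have s2 := Finset.card_filter_add_card_filter_not (s := QS d' k v w) (fun p => C p.1 ∨ C p.2)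
  have R1 : (QS d k w v).card ≤ (TS d k).card := Finset.card_filter_le _ _
  have R2 : (QS d' k w v).card ≤ (TS d' k).card := Finset.card_filter_le _ _
  have Q1 : (QS d k v w).card ≤ (TS d k).card := Finset.card_filter_le _ _
  have Q2 : (QS d' k v w).card ≤ (TS d' k).card := Finset.card_filter_le _ _
  have ex : ∀ {d : V → V → ℕ} (h : Half d C v w z), 2 ≤ k → (∃ c, C c ∧ d c v = 1) →
      0 < ((QS d k v w).filter (fun p => C p.1 ∨ C p.2)).card := by
    rintro d h hk ⟨c, hc, hcv⟩
    apply Finset.card_pos.2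
    refine ⟨(c, w), ?_⟩
    have e := h.f3 c w hc h.cw h.wz
    have := h.hvw
    simp only [QS, TS, Finset.mem_filter, Finset.mem_univ, true_and, hc, true_or, and_true]
    refine ⟨by omega, ⟨fun q => h.cv (q ▸ hc), ?_, e.symm⟩, fun q => q.2.1 rfl⟩
    intro q
    subst q
    have := h.self v
    omega
  set A := ((QS d k v w).filter (fun p => C p.1 ∨ C p.2)).card
  set A' := ((QS d' k v w).filter (fun p => C p.1 ∨ C p.2)).card
  have A1 : A ≤ (TS d k).card := by omega
  have A2 : A' ≤ (TS d' k).card := by omega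
  have D1 : BCM d k v - BCM d k w = (((QS d' k w v).card : ℚ) + A - (QS d k w v).card) / (TS d k).card := by
    unfold BCM
    rw [← sub_div]
    congr 1
    have : (IS d k v).card + (QS d k w v).card = (IS d k w).card + ((QS d' k w v).card + A) := by omega
    have : ((IS d k v).card : ℚ) + (QS d k w v).card = (IS d k w).card + ((QS d' k w v).card + A) := by exact_mod_cast this
    linarith
  have D2 : BCM d' k v - BCM d' k w = (((QS d k w v).card : ℚ) + A' - (QS d' k w v).card) / (TS d' k).card := by
    unfold BCM
    rw [← sub_div]
    congr 1
    have : (IS d' k v).card + (QS d' k w v).card = (IS d' k w).card + ((QS d k w v).card + A') := by omega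
    have : ((IS d' k v).card : ℚ) + (QS d' k w v).card = (IS d' k w).card + ((QS d k w v).card + A') := by exact_mod_cast this
    linarith
  have M := arith (T := (TS d k).card) (T' := (TS d' k).card) (R := (QS d k w v).card)
    (R' := (QS d' k w v).card) (Q := A) (Q' := A') (by positivity) (by positivity) (by positivity)
    (by positivity) (by positivity) (by positivity) (by exact_mod_cast R1) (by exact_mod_cast R2)
    (by exact_mod_cast A1) (by exact_mod_cast A2) (by exact_mod_cast b1) (by exact_mod_cast b2)
  rw [D1, D2]
  refine ⟨M.1, fun hk hc => M.2 ?_ ?_⟩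
  · exact_mod_cast ex h hk hc
  · obtain ⟨c, hc, hcv⟩ := hc
    exact_mod_cast ex h' hk ⟨c, hc, by rw [r.f2v c hc]; exact hcv⟩

end

/-! ### tree distances -/

section
variable {n : ℕ} {f : Fin (n+1) → Fin (n+1)}

abbrev tD (f : Fin (n+1) → Fin (n+1)) : Fin (n+1) → Fin (n+1) → ℕ := (treeGraphPF n f).dist

lemma tree_adj {x y : Fin (n+1)} (h : (treeGraphPF n f).Adj x y) :
    (2 ≤ y.val ∧ f y = x) ∨ (2 ≤ x.val ∧ f x = y) := by
  rw [treeGraphPF, SimpleGraph.fromRel_adj] at h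
  exact h.2

lemma adj_parent (hf : ValidPF n f) {t : Fin (n+1)} (ht : 2 ≤ t.val) : (treeGraphPF n f).Adj (f t) t := by
  rw [treeGraphPF, SimpleGraph.fromRel_adj]
  refine ⟨?_, Or.inl ⟨ht, rfl⟩⟩
  have := (hf.2 t ht).2
  intro e
  rw [e] at this
  omega

lemma reach_one (hf : ValidPF n f) : ∀ (m : ℕ) (t : Fin (n+1)), t.val = m → 1 ≤ t.val →
    ∀ r : Fin (n+1), r.val = 1 → (treeGraphPF n f).Reachable r t := by
  intro m
  induction m using Nat.strong_induction_on with
  | _ m ih =>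
    intro t htm ht r hr
    by_cases h2 : 2 ≤ t.val
    · have a := hf.2 t h2
      exact (ih (f t).val (by omega) (f t) rfl a.1 r hr).trans (adj_parent hf h2).reachable
    · have : r = t := Fin.ext (by omega)
      rw [this]

lemma reach (hf : ValidPF n f) {s t : Fin (n+1)} (hs : 1 ≤ s.val) (ht : 1 ≤ t.val) :
    (treeGraphPF n f).Reachable s t := by
  have h1 : 1 < n + 1 := by have := s.isLt; omega
  exact (reach_one hf _ s rfl hs ⟨1, h1⟩ rfl).symm.trans (reach_one hf _ t rfl ht ⟨1, h1⟩ rfl)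

lemma zero_not_reach (hf : ValidPF n f) {s : Fin (n+1)} : ∀ z : Fin (n+1), z.val = 0 → 
    ∀ (p : (treeGraphPF n f).Walk z s), s = z := by
  intro z hz p
  cases p with
  | nil => rfl
  | cons h p =>
    exfalso
    rcases tree_adj h with q | q
    · have := (hf.2 _ q.1).1
      rw [q.2] at this
      omega
    · omega

lemma tD_zero (hf : ValidPF n f) (s z : Fin (n+1)) (hz : z.val = 0) : tD f s z = 0 := by
  by_cases h : (treeGraphPF n f).Reachable s z
  · obtain ⟨p⟩ := h.symm
    rw [zero_not_reach hf z hz p]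
    simp [tD]
  · exact SimpleGraph.dist_eq_zero_of_not_reachable h

inductive Desc (f : Fin (n+1) → Fin (n+1)) (t : Fin (n+1)) : Fin (n+1) → Prop
  | base : Desc f t t
  | step (u : Fin (n+1)) : 2 ≤ u.val → Desc f t (f u) → Desc f t u

lemma Desc.le (hf : ValidPF n f) {t u : Fin (n+1)} (h : Desc f t u) : t.val ≤ u.val := by
  induction h with
  | base => exact le_rfl
  | step u hu _ ih => have := (hf.2 u hu).2; omega

lemma walk_cross (hf : ValidPF n f) {t : Fin (n+1)} (ht : 2 ≤ t.val) {x y : Fin (n+1)}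
    (p : (treeGraphPF n f).Walk x y) : ¬ Desc f t x → Desc f t y → 
    tD f x (f t) + 1 ≤ p.length := by
  induction p with
  | nil => intro a b; exact absurd b a
  | @cons x x' y h p ih =>
    intro hx hy
    rw [SimpleGraph.Walk.length_cons]
    by_cases hx' : Desc f t x'
    · have : x = f t := by
        rcases tree_adj h with q | q
        · cases hx' with
          | base => exact q.2.symm
          | step _ hu hd => rw [q.2] at hd; exact absurd hd hx
        · exact absurd (Desc.step x q.1 (by rw [q.2]; exact hx')) hx
      subst this
      simp [tD]
    · have i := ih hx' hy
      have : tD f x (f t) ≤ tD f x x' + tD f x' (f t) := h.reachable.dist_triangle_left _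
      have e : tD f x x' = 1 := SimpleGraph.dist_eq_one_iff_adj.2 h
      omega

lemma tD_rec (hf : ValidPF n f) {s t : Fin (n+1)} (hs : 1 ≤ s.val) (hst : s < t) :
    tD f s t = 1 + tD f s (f t) := by
  have hst' : s.val < t.val := hst
  have ht : 2 ≤ t.val := by omega
  have hp := hf.2 t ht
  apply le_antisymm
  · have : tD f s t ≤ tD f s (f t) + tD f (f t) t := (reach hf hs hp.1).dist_triangle_left _
    have e : tD f (f t) t = 1 := SimpleGraph.dist_eq_one_iff_adj.2 (adj_parent hf ht)
    omega
  · obtain ⟨p, hp⟩ := (reach hf hs (by omega : 1 ≤ t.val)).exists_walk_length_eq_dist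
    have := walk_cross hf ht p (fun h => by have := h.le hf; omega) Desc.base
    show 1 + tD f s (f t) ≤ (treeGraphPF n f).dist s t
    omega

lemma tD_comm (s t : Fin (n+1)) : tD f s t = tD f t s := SimpleGraph.dist_comm

/-! ### surgery -/

inductive InM (f : Fin (n+1) → Fin (n+1)) (v w : Fin (n+1)) (S : Finset (Fin (n+1))) : Fin (n+1) → Prop
  | zero (z : Fin (n+1)) : z.val = 0 → InM f v w S z
  | hv : InM f v w S v
  | hw : InM f v w S w
  | step (t : Fin (n+1)) : w < t → t ∉ S → InM f v w S (f t) → InM f v w S t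

def surg (f : Fin (n+1) → Fin (n+1)) (v w : Fin (n+1)) (S : Finset (Fin (n+1))) :
    Fin (n+1) → Fin (n+1) :=
  fun t => if t ∈ S ∨ t ≤ w then f t else Equiv.swap v w (f t)

structure Good (f : Fin (n+1) → Fin (n+1)) (v w : Fin (n+1)) (S : Finset (Fin (n+1))) : Prop where
  val : ValidPF n f
  one : 1 ≤ v.val
  succ : w.val = v.val + 1
  fw : f w = v
  hS : ∀ t ∈ S, w < t ∧ f t = v

variable {v w : Fin (n+1)} {S : Finset (Fin (n+1))}

lemma surg_val (g : Good f v w S) : ValidPF n (surg f v w S) := by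
  have h1 := g.one
  have h2 := g.succ
  constructor
  · intro t ht
    have : t ≤ w := by rw [Fin.le_def]; omega
    simp only [surg, this, or_true, if_true]
    exact g.val.1 t ht
  · intro t ht
    have a := g.val.2 t ht
    unfold surg
    split_ifs with q
    · exact a
    · rw [not_or, Fin.le_def] at q
      rw [Equiv.swap_apply_def]
      split_ifs <;> omega

lemma surg_good (g : Good f v w S) : Good (surg f v w S) v w S := by
  refine ⟨surg_val g, g.one, g.succ, ?_, fun t ht => ⟨(g.hS t ht).1, ?_⟩⟩
  · simp [surg, g.fw]
  · simp [surg, ht, (g.hS t ht).2]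

lemma surg_surg : surg (surg f v w S) v w S = f := by
  funext t
  unfold surg
  split_ifs <;> simp

lemma InM_surg1 {x : Fin (n+1)} (h : InM f v w S x) :
    InM (surg f v w S) v w S x := by
  induction h with
  | zero z hz => exact InM.zero z hz
  | hv => exact InM.hv
  | hw => exact InM.hw
  | step t ht hS _ ih =>
    refine InM.step t ht hS ?_
    have : surg f v w S t = Equiv.swap v w (f t) := by simp [surg, hS, not_le.2 ht]
    rw [this, Equiv.swap_apply_def]
    split_ifs
    · exact InM.hw
    · exact InM.hv
    · exact ih

lemma InM_surg {x : Fin (n+1)} : InM (surg f v w S) v w S x ↔ InM f v w S x :=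
  ⟨fun h => by simpa only [surg_surg] using InM_surg1 h, InM_surg1⟩

lemma InM_cases (g : Good f v w S) {x : Fin (n+1)} (h : InM f v w S x) (hx : 1 ≤ x.val) :
    x = v ∨ x = w ∨ (w < x ∧ x ∉ S ∧ InM f v w S (f x)) := by
  cases h with
  | zero z hz => omega
  | hv => simp
  | hw => simp
  | step t a b c => exact Or.inr (Or.inr ⟨a, b, c⟩)

lemma InM_ge (g : Good f v w S) {x : Fin (n+1)} (h : InM f v w S x) (hx : 1 ≤ x.val) : v.val ≤ x.val := by
  have := g.succ
  rcases InM_cases g h hx with e | e | e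
  · rw [e]
  · rw [e]; omega
  · have := Fin.lt_def.1 e.1; omega

lemma notM_one {x : Fin (n+1)} (h : ¬ InM f v w S x) : 1 ≤ x.val := by
  by_contra q
  exact h (InM.zero x (by omega))

lemma notM_ne {x : Fin (n+1)} (h : ¬ InM f v w S x) : x ≠ v ∧ x ≠ w :=
  ⟨fun e => h (e ▸ InM.hv), fun e => h (e ▸ InM.hw)⟩

/-- parent of a vertex of `C` (or of `v`) -/
lemma par_C (g : Good f v w S) {x : Fin (n+1)} (h : ¬ InM f v w S x ∨ x = v) (hx : 2 ≤ x.val) :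
    (¬ InM f v w S (f x) ∨ f x = v) ∧ surg f v w S x = f x := by
  have hs := g.succ
  have hp := g.val.2 x hx
  by_cases hxv : x.val ≤ v.val
  · refine ⟨Or.inl fun q => ?_, ?_⟩
    · have := InM_ge g q hp.1
      omega
    · have : x ≤ w := by rw [Fin.le_def]; omega
      simp [surg, this]
  · have hC : ¬ InM f v w S x := by
      rcases h with h | h
      · exact h
      · subst h; omega
    have hne := notM_ne hC
    have hxw : w < x := by
      rw [Fin.lt_def]
      have : x.val ≠ w.val := fun e => hne.2 (Fin.ext e)
      omega
    by_cases hS : x ∈ S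
    · exact ⟨Or.inr (g.hS x hS).2, by simp [surg, hS]⟩
    · have : ¬ InM f v w S (f x) := fun q => hC (InM.step x hxw hS q)
      refine ⟨Or.inl this, ?_⟩
      have a := notM_ne this
      simp [surg, Equiv.swap_apply_of_ne_of_ne a.1 a.2]

lemma dvw (g : Good f v w S) : tD f v w = 1 := by
  have : v < w := by rw [Fin.lt_def, g.succ]; omega
  rw [tD_rec g.val g.one this, g.fw]
  simp [tD]

lemma F1 (g : Good f v w S) : ∀ (m : ℕ) (s t : Fin (n+1)), s.val + t.val ≤ m → 
    InM f v w S s → InM f v w S t → 1 ≤ s.val → 1 ≤ t.val →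
    tD (surg f v w S) (Equiv.swap v w s) (Equiv.swap v w t) = tD f s t := by
  intro m
  have hs := g.succ
  have g' := surg_good g
  have core : ∀ m, (∀ m' < m, ∀ (s t : Fin (n+1)), s.val + t.val = m' → 
    InM f v w S s → InM f v w S t → 1 ≤ s.val → 1 ≤ t.val →
    tD (surg f v w S) (Equiv.swap v w s) (Equiv.swap v w t) = tD f s t) → 
    ∀ (s t : Fin (n+1)), s.val + t.val = m → s < t → 
    InM f v w S s → InM f v w S t → 1 ≤ s.val → 1 ≤ t.val →
    tD (surg f v w S) (Equiv.swap v w s) (Equiv.swap v w t) = tD f s t := by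
    intro m ih s t hm hst Ms Mt s1 t1
    have hst' := Fin.lt_def.1 hst
    have vs := InM_ge g Ms s1
    rcases InM_cases g Mt t1 with e | e | ⟨e1, e2, e3⟩
    · subst e; omega
    · have : s = v := Fin.ext (by subst e; omega)
      subst this; subst e
      rw [Equiv.swap_apply_left, Equiv.swap_apply_right, tD_comm, dvw g, dvw g']
    · have e1' := Fin.lt_def.1 e1
      have hp := g.val.2 t (by omega)
      have st : Equiv.swap v w t = t := Equiv.swap_apply_of_ne_of_ne
        (fun q => by subst q; omega) (fun q => by subst q; omega)
      have ft : surg f v w S t = Equiv.swap v w (f t) := by simp [surg, e2, not_le.2 e1]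
      have q1 : 1 ≤ (Equiv.swap v w s).val ∧ Equiv.swap v w s < t := by
        rw [Equiv.swap_apply_def, Fin.lt_def]
        have := g.one
        split_ifs <;> omega
      rw [st, tD_rec g'.val q1.1 q1.2, tD_rec g.val s1 hst, ft,
        ih (s.val + (f t).val) (by omega) s (f t) rfl Ms e3 s1 hp.1]
  intro s t hm
  induction h : s.val + t.val using Nat.strong_induction_on generalizing s t m with
  | _ k ih =>
    intro Ms Mt s1 t1
    have ih' : ∀ m' < k, ∀ (s t : Fin (n+1)), s.val + t.val = m' → 
      InM f v w S s → InM f v w S t → 1 ≤ s.val → 1 ≤ t.val →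
      tD (surg f v w S) (Equiv.swap v w s) (Equiv.swap v w t) = tD f s t :=
      fun m' hm' s t e => ih m' hm' m' s t (by omega) e
    rcases lt_trichotomy s t with q | q | q
    · exact core k ih' s t h q Ms Mt s1 t1
    · subst q; simp [tD]
    · rw [tD_comm, core k ih' t s (by omega) q Mt Ms t1 s1, tD_comm]

lemma F2 (g : Good f v w S) : ∀ (m : ℕ) (s t : Fin (n+1)), s.val + t.val = m → 
    (¬ InM f v w S s ∨ s = v) → (¬ InM f v w S t ∨ t = v) →
    tD (surg f v w S) s t = tD f s t := by
  intro m
  have g' := surg_good g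
  have one : ∀ s, (¬ InM f v w S s ∨ s = v) → 1 ≤ s.val := by
    rintro s (h | h)
    · exact notM_one h
    · rw [h]; exact g.one
  induction m using Nat.strong_induction_on with
  | _ m ih =>
    have core : ∀ (s t : Fin (n+1)), s.val + t.val = m → s < t → 
      (¬ InM f v w S s ∨ s = v) → (¬ InM f v w S t ∨ t = v) →
      tD (surg f v w S) s t = tD f s t := by
      intro s t hm hst Ms Mt
      have hst' := Fin.lt_def.1 hst
      have s1 := one s Ms
      have p := par_C g Mt (by omega)
      have hp := g.val.2 t (by omega)
      rw [tD_rec g'.val s1 hst, tD_rec g.val s1 hst, p.2, ih _ (by omega) s (f t) rfl Ms p.1]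
    intro s t hm Ms Mt
    rcases lt_trichotomy s t with q | q | q
    · exact core s t hm q Ms Mt
    · subst q; simp [tD]
    · rw [tD_comm, core t s (by omega) q Mt Ms, tD_comm]

lemma F3 (g : Good f v w S) : ∀ (m : ℕ) (c x : Fin (n+1)), c.val + x.val = m → 
    ¬ InM f v w S c → InM f v w S x → 1 ≤ x.val → tD f c x = tD f c v + tD f v x := by
  intro m
  have hs := g.succ
  have h1 := g.one
  induction m using Nat.strong_induction_on with
  | _ m ih =>
    intro c x hm hc hx x1
    have c1 := notM_one hc
    have cn := notM_ne hc
    have xv := InM_ge g hx x1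
    rcases lt_trichotomy c x with q | q | q
    · have q' := Fin.lt_def.1 q
      rcases InM_cases g hx x1 with e | e | ⟨e1, e2, e3⟩
      · subst e; simp [tD]
      · subst e
        rw [tD_rec g.val c1 q, g.fw, dvw g]; omega
      · have e1' := Fin.lt_def.1 e1
        have hp := g.val.2 x (by omega)
        rw [tD_rec g.val c1 q, ih _ (by omega) c (f x) rfl hc e3 hp.1,
          tD_rec g.val h1 (by rw [Fin.lt_def]; omega : v < x)]
        omega
    · subst q; exact absurd hx hc
    · have q' := Fin.lt_def.1 q
      have p := (par_C g (Or.inl hc) (by omega)).1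
      have hp := g.val.2 c (by omega)
      rw [tD_comm, tD_rec g.val x1 q, tD_comm c v, tD_rec g.val h1 (by rw [Fin.lt_def]; omega : v < c),
        tD_comm x, tD_comm v (f c)]
      rcases p with p | p
      · rw [ih _ (by omega) (f c) x rfl p hx x1]; omega
      · rw [p]; simp [tD]

lemma val_ne_zero {x z : Fin (n+1)} (hz : z.val = 0) : x ≠ z ↔ 1 ≤ x.val := by
  rw [Ne, Fin.ext_iff]; omega

lemma half (g : Good f v w S) : Half (tD f) (fun x => ¬ InM f v w S x) v w 0 := by
  have hs := g.succ
  have h1 := g.one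
  have z : (0 : Fin (n+1)).val = 0 := rfl
  refine ⟨tD_comm, fun s => by simp [tD], fun s => tD_zero g.val s 0 rfl, ?_, dvw g, ?_, ?_, ?_, ?_, ?_, ?_, ?_⟩
  · intro s t a b c
    rw [val_ne_zero z] at a b
    exact (reach g.val a b).pos_dist_of_ne c
  · intro s t a b
    exact (reach g.val (notM_one a) h1).dist_triangle_left _
  · intro c x a b e
    rw [val_ne_zero z] at e
    exact F3 g _ c x rfl a (not_not.1 b) e
  · exact not_not.2 (InM.zero _ rfl)
  · exact not_not.2 InM.hv
  · exact not_not.2 InM.hw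
  · rw [val_ne_zero z]; exact h1
  · rw [val_ne_zero z]; omega

lemma rel2 (g : Good f v w S) : Rel2 (tD f) (tD (surg f v w S)) (fun x => ¬ InM f v w S x) v w := by
  have hs := g.succ
  have h1 := g.one
  have z : (0 : Fin (n+1)).val = 0 := rfl
  have vz : v ≠ 0 := by rw [val_ne_zero z]; exact h1
  have wz : w ≠ 0 := by rw [val_ne_zero z]; omega
  have sz : Equiv.swap v w 0 = 0 := Equiv.swap_apply_of_ne_of_ne vz.symm wz.symm
  refine ⟨fun s t a b => ?_, fun s t a b => F2 g _ s t rfl (Or.inl a) (Or.inl b),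
    fun s a => F2 g _ s v rfl (Or.inl a) (Or.inr rfl)⟩
  by_cases hs0 : s = 0
  · subst hs0
    rw [sz, tD_comm, tD_zero (surg_val g) _ _ rfl, tD_comm, tD_zero g.val _ _ rfl]
  by_cases ht0 : t = 0
  · subst ht0
    rw [sz, tD_zero (surg_val g) _ _ rfl, tD_zero g.val _ _ rfl]
  exact F1 g _ s t le_rfl (not_not.1 a) (not_not.1 b) ((val_ne_zero z).1 hs0) ((val_ne_zero z).1 ht0)

lemma even_sym {V : Type*} [Fintype V] (P : Finset (V × V)) (h : ∀ s t, (s, t) ∈ P → (t, s) ∈ P ∧ s ≠ t) :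
    2 * (P.card / 2) = P.card := by
  have : (P.card : ZMod 2) = 0 := by
    rw [Finset.card_eq_sum_ones, Nat.cast_sum]
    refine Finset.sum_involution (fun p _ => (p.2, p.1)) ?_ ?_ ?_ ?_
    · intros; decide
    · rintro ⟨s, t⟩ hp _ e
      rw [Prod.mk.injEq] at e
      exact (h s t hp).2 e.2
    · rintro ⟨s, t⟩ hp; exact (h s t hp).1
    · rintro ⟨s, t⟩ hp; rfl
  rw [ZMod.natCast_eq_zero_iff] at this
  omega

lemma BCPF_eq (k : ℕ) (x : Fin (n+1)) : BCPF n f k x = BCM (tD f) k x := by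
  have e1 : PtotPF n f k = (TS (tD f) k).card / 2 := rfl
  have e2 : PvPF n f k x = (IS (tD f) k x).card / 2 := by
    unfold PvPF IS TS
    rw [Finset.filter_filter]
    simp only [and_assoc]
    rfl
  have c1 : 2 * ((TS (tD f) k).card / 2) = (TS (tD f) k).card := by
    apply even_sym
    intro s t h
    simp only [TS, Finset.mem_filter, Finset.mem_univ, true_and] at h ⊢
    rw [tD_comm t s]
    refine ⟨h, ?_⟩
    rintro rfl
    simp [tD] at h
  have c2 : 2 * ((IS (tD f) k x).card / 2) = (IS (tD f) k x).card := by
    apply even_sym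
    intro s t h
    simp only [IS, TS, Finset.mem_filter, Finset.mem_univ, true_and] at h ⊢
    unfold IntM at h ⊢
    rw [tD_comm t s, tD_comm t x, tD_comm x s, add_comm (tD f x t)]
    refine ⟨⟨h.1, h.2.2.1, h.2.1, h.2.2.2⟩, ?_⟩
    rintro rfl
    simp [tD] at h
  unfold BCPF BCM
  rw [e1, e2]
  have c1' : (2:ℚ) * (((TS (tD f) k).card / 2 : ℕ) : ℚ) = (TS (tD f) k).card := by exact_mod_cast c1
  have c2' : (2:ℚ) * (((IS (tD f) k x).card / 2 : ℕ) : ℚ) = (IS (tD f) k x).card := by exact_mod_cast c2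
  rw [← c1', ← c2', mul_div_mul_left _ _ two_ne_zero]

lemma pair_le (g : Good f v w S) (k : ℕ) :
    0 ≤ (BCPF n f k v - BCPF n f k w) + (BCPF n (surg f v w S) k v - BCPF n (surg f v w S) k w) ∧
    (2 ≤ k → (∃ c, ¬ InM f v w S c ∧ (treeGraphPF n f).Adj c v) → 
    0 < (BCPF n f k v - BCPF n f k w) + (BCPF n (surg f v w S) k v - BCPF n (surg f v w S) k w)) := by
  have h' : Half (tD (surg f v w S)) (fun x => ¬ InM f v w S x) v w 0 := by
    have := half (surg_good g)
    simpa only [InM_surg] using this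
  have := BCM_pair (k := k) (half g) h' (rel2 g)
  simp only [BCPF_eq]
  refine ⟨this.1, fun hk ⟨c, h1, h2⟩ => this.2 hk ⟨c, h1, SimpleGraph.dist_eq_one_iff_adj.2 h2⟩⟩

end

/-! ### weights -/

section
variable {n : ℕ} {f : Fin (n+1) → Fin (n+1)} {v w : Fin (n+1)} {S : Finset (Fin (n+1))}

def chl (f : Fin (n+1) → Fin (n+1)) (u : Fin (n+1)) : Finset (Fin (n+1)) :=
  Finset.univ.filter (fun t => 2 ≤ t.val ∧ f t = u)

lemma mem_chl {u t : Fin (n+1)} : t ∈ chl f u ↔ 2 ≤ t.val ∧ f t = u := by simp [chl]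

def Wt (f : Fin (n+1) → Fin (n+1)) : ℚ := ∏ u, ((chl f u).card.factorial : ℚ)

lemma prod_rank (F : Finset (Fin (n+1))) :
    ∏ t ∈ F, (1 + (F.filter (fun s => s < t)).card) = F.card.factorial := by
  induction F using Finset.induction_on_max with
  | empty => simp
  | insert a F ha ih =>
    have hna : a ∉ F := fun h => lt_irrefl _ (ha a h)
    rw [Finset.prod_insert hna, Finset.card_insert_of_notMem hna, Nat.factorial_succ, ← ih]
    congr 1
    · rw [add_comm]
      congr 2
      ext s
      simp only [Finset.mem_filter, Finset.mem_insert]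
      constructor
      · rintro ⟨rfl | h, h2⟩
        · exact absurd h2 (lt_irrefl _)
        · exact h
      · exact fun h => ⟨Or.inr h, ha s h⟩
    · refine Finset.prod_congr rfl fun t ht => ?_
      congr 2
      ext s
      simp only [Finset.mem_filter, Finset.mem_insert]
      constructor
      · rintro ⟨rfl | h, h2⟩
        · exact absurd (h2.trans (ha t ht)) (lt_irrefl _)
        · exact ⟨h, h2⟩
      · exact fun h => ⟨Or.inr h.1, h.2⟩

def Kc (n : ℕ) : ℚ := ∏ t ∈ Finset.univ.filter (fun t : Fin (n+1) => 2 ≤ t.val), (2 * (t.val : ℚ) - 3)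

lemma Kc_pos : 0 < Kc n := by
  refine Finset.prod_pos fun t ht => ?_
  simp only [Finset.mem_filter, Finset.mem_univ, true_and] at ht
  have : (2:ℚ) ≤ t.val := by exact_mod_cast ht
  linarith

lemma prob_eq : probPF n f = Wt f / Kc n := by
  unfold probPF Kc
  rw [Finset.prod_div_distrib]
  congr 1
  rw [← Finset.prod_fiberwise (Finset.univ.filter (fun t : Fin (n+1) => 2 ≤ t.val)) f]
  unfold Wt
  refine Finset.prod_congr rfl fun u _ => ?_
  rw [← prod_rank, Nat.cast_prod]
  have : (Finset.univ.filter (fun t : Fin (n+1) => 2 ≤ t.val)).filter (fun t => f t = u) = chl f u := by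
    ext t; simp [chl]
  rw [this]
  refine Finset.prod_congr rfl fun t ht => ?_
  rw [mem_chl] at ht
  norm_cast
  unfold degPF
  congr 2
  ext s
  simp only [Finset.mem_filter, Finset.mem_univ, true_and, mem_chl, Fin.lt_def, ht.2]
  constructor
  · rintro ⟨a, b, c⟩; exact ⟨⟨a, c⟩, by omega⟩
  · rintro ⟨⟨a, c⟩, b⟩; exact ⟨a, by omega, c⟩

def om (f : Fin (n+1) → Fin (n+1)) (v w : Fin (n+1)) (S : Finset (Fin (n+1))) : ℚ :=
  (S.card.factorial : ℚ) * (((chl f v).card - 1 - S.card).factorial : ℚ) * ((chl f w).card.factorial : ℚ) *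
    ∏ u ∈ (Finset.univ.erase v).erase w, ((chl f u).card.factorial : ℚ)

lemma om_pos : 0 < om f v w S := by
  unfold om
  have : 0 < ∏ u ∈ (Finset.univ.erase v).erase w, ((chl f u).card.factorial : ℚ) :=
    Finset.prod_pos fun u _ => by exact_mod_cast Nat.factorial_pos _
  have h : ∀ m : ℕ, 0 < (m.factorial : ℚ) := fun m => by exact_mod_cast Nat.factorial_pos _
  have := h S.card
  have := h ((chl f v).card - 1 - S.card)
  have := h (chl f w).card
  positivity

lemma vlt (g : Good f v w S) : v < w := by rw [Fin.lt_def, g.succ]; omega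

lemma child_v (g : Good f v w S) {t : Fin (n+1)} (h2 : 2 ≤ t.val) (h : f t = v) (hne : t ≠ w) : w < t := by
  have := (g.val.2 t h2).2
  have a := g.succ
  rw [h] at this
  have : t.val ≠ w.val := fun e => hne (Fin.ext e)
  rw [Fin.lt_def]; omega

lemma chl_surg_v (g : Good f v w S) : (chl (surg f v w S) v).card = (chl f w).card + (1 + S.card) := by
  have hvw := vlt g
  have h1 := g.one
  have hs := g.succ
  have wS : w ∉ S := fun h => lt_irrefl _ (g.hS w h).1
  have e : chl (surg f v w S) v = chl f w ∪ insert w S := by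
    ext t
    rw [mem_chl, Finset.mem_union, Finset.mem_insert, mem_chl]
    unfold surg
    constructor
    · rintro ⟨a, b⟩
      split_ifs at b with q
      · rcases q with q | q
        · exact Or.inr (Or.inr q)
        · by_cases e : t = w
          · exact Or.inr (Or.inl e)
          · exact absurd (child_v g a b e) (not_lt.2 q)
      · left
        refine ⟨a, ?_⟩
        rw [Equiv.swap_apply_eq_iff, Equiv.swap_apply_left] at b
        exact b
    · rintro (⟨a, b⟩ | rfl | b)
      · have l := (g.val.2 t a).2
        rw [b] at l
        have : ¬ (t ∈ S ∨ t ≤ w) := by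
          rintro (q | q)
          · rw [(g.hS t q).2] at b; exact absurd b (ne_of_lt hvw)
          · rw [Fin.le_def] at q; omega
        rw [if_neg this, b]
        simp [a]
      · simp [g.fw]; omega
      · have := (g.hS t b)
        have l := Fin.lt_def.1 this.1
        simp [b, this.2]; omega
  rw [e, Finset.card_union_of_disjoint, Finset.card_insert_of_notMem wS, add_comm S.card]
  rw [Finset.disjoint_left]
  intro t ht h
  rw [mem_chl] at ht
  have : f t = v := by
    rcases Finset.mem_insert.1 h with rfl | h
    · exact g.fw
    · exact (g.hS t h).2
  rw [this] at ht
  exact absurd ht.2 (ne_of_lt hvw)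

lemma chl_v (g : Good f v w S) : (chl f v).card = (chl (surg f v w S) w).card + (1 + S.card) := by
  have := chl_surg_v (surg_good g)
  rwa [surg_surg] at this

lemma chl_surg_u (g : Good f v w S) {u : Fin (n+1)} (hv : u ≠ v) (hw : u ≠ w) :
    chl (surg f v w S) u = chl f u := by
  ext t
  rw [mem_chl, mem_chl]
  unfold surg
  split_ifs
  · rfl
  · rw [Equiv.swap_apply_eq_iff, Equiv.swap_apply_of_ne_of_ne hv hw]

lemma om_surg (g : Good f v w S) : om (surg f v w S) v w S = om f v w S := by
  unfold om
  have a := chl_surg_v g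
  have b := chl_v g
  have a1 : (chl (surg f v w S) v).card - 1 - S.card = (chl f w).card := by omega
  have b1 : (chl f v).card - 1 - S.card = (chl (surg f v w S) w).card := by omega
  rw [a1, b1]
  have : ∏ u ∈ (Finset.univ.erase v).erase w, ((chl (surg f v w S) u).card.factorial : ℚ)
    = ∏ u ∈ (Finset.univ.erase v).erase w, ((chl f u).card.factorial : ℚ) := by
    refine Finset.prod_congr rfl fun u hu => ?_
    simp only [Finset.mem_erase, Finset.mem_univ, and_true] at hu
    rw [chl_surg_u g hu.2 hu.1]
  rw [this]; ring

lemma sum_om (g : Good f v w ∅) :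
    ∑ S ∈ Finset.univ.filter (fun S => Good f v w S), om f v w S = Wt f := by
  set B := (chl f v).erase w with hB
  have hs := g.succ
  have h1 := g.one
  have wm : w ∈ chl f v := by rw [mem_chl]; exact ⟨by omega, g.fw⟩
  have cB : (chl f v).card = B.card + 1 := (Finset.card_erase_add_one wm).symm
  have e : Finset.univ.filter (fun S => Good f v w S) = B.powerset := by
    ext S
    simp only [Finset.mem_filter, Finset.mem_univ, true_and, Finset.mem_powerset]
    constructor
    · intro gS t ht
      have := gS.hS t ht
      have l := Fin.lt_def.1 this.1
      rw [hB, Finset.mem_erase, mem_chl]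
      exact ⟨ne_of_gt this.1, by omega, this.2⟩
    · intro h
      refine ⟨g.val, g.one, g.succ, g.fw, fun t ht => ?_⟩
      have := h ht
      rw [hB, Finset.mem_erase, mem_chl] at this
      exact ⟨child_v g this.2.1 this.2.2 this.1, this.2.2⟩
  rw [e]
  unfold om Wt
  rw [← Finset.mul_prod_erase Finset.univ _ (Finset.mem_univ v),
    ← Finset.mul_prod_erase (Finset.univ.erase v) _ (Finset.mem_erase.2 ⟨ne_of_gt (vlt g), Finset.mem_univ w⟩),
    ← mul_assoc, ← Finset.sum_mul, ← Finset.sum_mul]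
  congr 2
  rw [cB, Nat.add_sub_cancel]
  rw [Finset.sum_powerset_apply_card (fun m => (m.factorial : ℚ) * ((B.card - m).factorial : ℚ))]
  rw [Nat.factorial_succ]
  rw [Finset.sum_congr rfl (g := fun _ => (B.card.factorial : ℚ))]
  · simp
  · intro m hm
    rw [Finset.mem_range] at hm
    rw [nsmul_eq_mul, ← mul_assoc]
    exact_mod_cast Nat.choose_mul_factorial_mul_factorial (by omega : m ≤ B.card)

def VF (n : ℕ) : Finset (Fin (n+1) → Fin (n+1)) := Finset.univ.filter (fun f => ValidPF n f)

def dl (k : ℕ) (v w : Fin (n+1)) (f : Fin (n+1) → Fin (n+1)) : ℚ := BCPF n f k v - BCPF n f k w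

lemma part2 (hn : 3 ≤ n) (h1 : 1 ≤ v.val) (hs : w.val = v.val + 1) {k : ℕ} (hk : 2 ≤ k) :
    0 < ∑ f ∈ (VF n).filter (fun f => f w = v), Wt f * dl k v w f := by
  have G0 : ∀ f ∈ (VF n).filter (fun f => f w = v), Good f v w ∅ := by
    intro f hf
    simp only [VF, Finset.mem_filter, Finset.mem_univ, true_and] at hf
    exact ⟨hf.1, h1, hs, hf.2, by simp⟩
  have e1 : ∑ f ∈ (VF n).filter (fun f => f w = v), Wt f * dl k v w f =
      ∑ f ∈ (VF n).filter (fun f => f w = v), ∑ S ∈ Finset.univ.filter (fun S => Good f v w S),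
        om f v w S * dl k v w f := by
    refine Finset.sum_congr rfl fun f hf => ?_
    rw [← Finset.sum_mul, sum_om (G0 f hf)]
  rw [e1, Finset.sum_sigma']
  set X := ((VF n).filter (fun f => f w = v)).sigma (fun f => Finset.univ.filter (fun S => Good f v w S)) with hX
  have memX : ∀ p : (Σ _ : Fin (n+1) → Fin (n+1), Finset (Fin (n+1))), p ∈ X ↔ Good p.1 v w p.2 := by
    intro p
    simp only [hX, VF, Finset.mem_sigma, Finset.mem_filter, Finset.mem_univ, true_and]
    exact ⟨fun h => h.2, fun h => ⟨⟨h.val, h.fw⟩, h⟩⟩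
  have e2 : ∑ p ∈ X, om p.1 v w p.2 * dl k v w p.1 =
      ∑ p ∈ X, om p.1 v w p.2 * dl k v w (surg p.1 v w p.2) := by
    refine Finset.sum_nbij' (fun p => ⟨surg p.1 v w p.2, p.2⟩) (fun p => ⟨surg p.1 v w p.2, p.2⟩) ?_ ?_ ?_ ?_ ?_
    · intro p hp
      rw [memX] at hp ⊢
      exact surg_good hp
    · intro p hp
      rw [memX] at hp ⊢
      exact surg_good hp
    · intro p hp
      simp [surg_surg]
    · intro p hp
      simp [surg_surg]
    · intro p hp
      rw [memX] at hp
      simp only [surg_surg, om_surg hp]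
  have e3 : 0 < ∑ p ∈ X, om p.1 v w p.2 * (dl k v w p.1 + dl k v w (surg p.1 v w p.2)) := by
    have hwn := w.isLt
    let f : Fin (n+1) → Fin (n+1) := fun t => if t.val < 2 then 0 else if t = w then v else ⟨1, by omega⟩
    have fval : ValidPF n f := by
      constructor
      · intro t ht; simp only [f, ht, if_true]; rfl
      · intro t ht
        simp only [f, not_lt.2 ht, if_false]
        split_ifs with q
        · subst q; omega
        · simp; omega
    have fw : f w = v := by
      have : ¬ w.val < 2 := by omega
      simp only [f, this, if_false, if_true]
    refine Finset.sum_pos' ?_ ?_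
    · intro p hp
      rw [memX] at hp
      exact mul_nonneg om_pos.le (pair_le hp k).1
    · by_cases hv : 2 ≤ v.val
      · have g : Good f v w ∅ := ⟨fval, h1, hs, fw, by simp⟩
        refine ⟨⟨f, ∅⟩, (memX _).2 g, mul_pos om_pos ((pair_le g k).2 hk ⟨f v, ?_, adj_parent fval hv⟩)⟩
        rcases (par_C g (Or.inr rfl) hv).1 with q | q
        · exact q
        · have := (fval.2 v hv).2
          rw [q] at this; omega
      · let c : Fin (n+1) := ⟨3, by omega⟩
        have hc : c.val = 3 := rfl
        have cw : c ≠ w := by rw [Ne, Fin.ext_iff]; omega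
        have fc : f c = v := by
          have : ¬ c.val < 2 := by omega
          simp only [f, this, if_false, cw]
          apply Fin.ext
          simp; omega
        have g : Good f v w {c} := ⟨fval, h1, hs, fw, by
          intro t ht
          rw [Finset.mem_singleton] at ht
          subst ht
          exact ⟨by rw [Fin.lt_def]; omega, fc⟩⟩
        refine ⟨⟨f, {c}⟩, (memX _).2 g, mul_pos om_pos ((pair_le g k).2 hk ⟨c, ?_, ?_⟩)⟩
        · intro q
          rcases InM_cases g q (by omega) with e | e | e
          · rw [Fin.ext_iff] at e; omega
          · exact cw e
          · simp at e
        · have := adj_parent fval (t := c) (by omega)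
          rw [fc] at this
          exact this.symm
  simp only [mul_add, Finset.sum_add_distrib] at e3
  rw [← e2] at e3
  linarith

/-! ### label swap -/

def rel (v w : Fin (n+1)) (f : Fin (n+1) → Fin (n+1)) : Fin (n+1) → Fin (n+1) :=
  fun t => Equiv.swap v w (f (Equiv.swap v w t))

lemma rel_rel : rel v w (rel v w f) = f := by
  funext t; simp [rel]

lemma rel_val (h1 : 2 ≤ v.val) (hs : w.val = v.val + 1) (hf : ValidPF n f) (hw : f w ≠ v) :
    ValidPF n (rel v w f) ∧ rel v w f w ≠ v := by
  have a := hf.2 v h1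
  have b := hf.2 w (by omega)
  have hw' : (f w).val ≠ v.val := fun e => hw (Fin.ext e)
  refine ⟨⟨fun t ht => ?_, fun t ht => ?_⟩, ?_⟩
  · have t1 : t ≠ v := by rw [Ne, Fin.ext_iff]; omega
    have t2 : t ≠ w := by rw [Ne, Fin.ext_iff]; omega
    have := hf.1 t ht
    unfold rel
    rw [Equiv.swap_apply_of_ne_of_ne t1 t2, Equiv.swap_apply_of_ne_of_ne, this]
    · rw [Ne, Fin.ext_iff]; omega
    · rw [Ne, Fin.ext_iff]; omega
  · unfold rel
    have c := hf.2 t ht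
    rw [Equiv.swap_apply_def v w t]
    split_ifs with q1 q2
    · subst q1
      rw [Equiv.swap_apply_of_ne_of_ne hw (by rw [Ne, Fin.ext_iff]; omega)]
      omega
    · subst q2
      rw [Equiv.swap_apply_of_ne_of_ne (by rw [Ne, Fin.ext_iff]; omega) (by rw [Ne, Fin.ext_iff]; omega)]
      omega
    · rw [Fin.ext_iff] at q1 q2
      rw [Equiv.swap_apply_def]
      split_ifs with q3 q4
      · rw [Fin.ext_iff] at q3; omega
      · rw [Fin.ext_iff] at q4; omega
      · exact c
  · unfold rel
    rw [Equiv.swap_apply_right, Ne, Equiv.swap_apply_eq_iff, Equiv.swap_apply_left, Fin.ext_iff]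
    omega

lemma rel_val_iff (h1 : 2 ≤ v.val) (hs : w.val = v.val + 1) (hf : ValidPF n f) (hw : f w ≠ v) (t : Fin (n+1)) :
    2 ≤ (Equiv.swap v w t).val ↔ 2 ≤ t.val := by
  rw [Equiv.swap_apply_def]
  split_ifs with a b
  · subst a; omega
  · subst b; omega
  · rfl

lemma Wt_rel (h1 : 2 ≤ v.val) (hs : w.val = v.val + 1) (hf : ValidPF n f) (hw : f w ≠ v) :
    Wt (rel v w f) = Wt f := by
  unfold Wt
  rw [← Equiv.prod_comp (Equiv.swap v w)]
  refine Finset.prod_congr rfl fun u _ => ?_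
  congr 2
  refine Finset.card_nbij' (Equiv.swap v w) (Equiv.swap v w) ?_ ?_ ?_ ?_
  · intro t ht
    rw [Finset.mem_coe, mem_chl] at ht ⊢
    refine ⟨(rel_val_iff h1 hs hf hw t).2 ht.1, ?_⟩
    simpa [rel] using ht.2
  · intro t ht
    rw [Finset.mem_coe, mem_chl] at ht ⊢
    refine ⟨(rel_val_iff h1 hs hf hw t).2 ht.1, ?_⟩
    simpa [rel] using ht.2
  · intro t _; simp
  · intro t _; simp

lemma adj_rel (h1 : 2 ≤ v.val) (hs : w.val = v.val + 1) (hf : ValidPF n f) (hw : f w ≠ v) (x y : Fin (n+1))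
    (h : (treeGraphPF n f).Adj x y) :
    (treeGraphPF n (rel v w f)).Adj (Equiv.swap v w x) (Equiv.swap v w y) := by
  rw [treeGraphPF, SimpleGraph.fromRel_adj] at h ⊢
  rw [rel_val_iff h1 hs hf hw, rel_val_iff h1 hs hf hw]
  simpa [rel] using h

lemma tD_rel_le (h1 : 2 ≤ v.val) (hs : w.val = v.val + 1) (hf : ValidPF n f) (hw : f w ≠ v) (x y : Fin (n+1))
    (hx : 1 ≤ x.val) (hy : 1 ≤ y.val) : tD (rel v w f) (Equiv.swap v w x) (Equiv.swap v w y) ≤ tD f x y := by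
  obtain ⟨p, hp⟩ := (reach hf hx hy).exists_walk_length_eq_dist
  let φ : treeGraphPF n f →g treeGraphPF n (rel v w f) :=
    ⟨Equiv.swap v w, fun {x y} h => adj_rel h1 hs hf hw x y h⟩
  have := SimpleGraph.dist_le (p.map φ)
  rw [SimpleGraph.Walk.length_map, hp] at this
  exact this

lemma tD_rel (h1 : 2 ≤ v.val) (hs : w.val = v.val + 1) (hf : ValidPF n f) (hw : f w ≠ v) (x y : Fin (n+1)) :
    tD (rel v w f) (Equiv.swap v w x) (Equiv.swap v w y) = tD f x y := by
  have r := rel_val h1 hs hf hw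
  have sz : ∀ x : Fin (n+1), x.val = 0 → (Equiv.swap v w x).val = 0 := by
    intro x hx
    rw [Equiv.swap_apply_of_ne_of_ne, hx] <;> (rw [Ne, Fin.ext_iff]; omega)
  have sp : ∀ x : Fin (n+1), 1 ≤ x.val → 1 ≤ (Equiv.swap v w x).val := by
    intro x hx
    rw [Equiv.swap_apply_def]
    split_ifs <;> omega
  by_cases hx : x.val = 0
  · rw [tD_comm, tD_zero r.1 _ _ (sz x hx), tD_comm, tD_zero hf _ _ hx]
  by_cases hy : y.val = 0
  · rw [tD_zero r.1 _ _ (sz y hy), tD_zero hf _ _ hy]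
  apply le_antisymm
  · exact tD_rel_le h1 hs hf hw x y (by omega) (by omega)
  · have := tD_rel_le h1 hs r.1 r.2 _ _ (sp x (by omega)) (sp y (by omega))
    simpa [rel_rel] using this

lemma BC_rel (h1 : 2 ≤ v.val) (hs : w.val = v.val + 1) (hf : ValidPF n f) (hw : f w ≠ v) (k : ℕ) (x : Fin (n+1)) :
    BCPF n (rel v w f) k (Equiv.swap v w x) = BCPF n f k x := by
  rw [BCPF_eq, BCPF_eq]
  unfold BCM
  have key := tD_rel h1 hs hf hw
  have key2 : ∀ a b, tD (rel v w f) a b = tD f (Equiv.swap v w a) (Equiv.swap v w b) := by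
    intro a b; rw [← key]; simp
  congr 2
  · refine Finset.card_nbij' (fun p => (Equiv.swap v w p.1, Equiv.swap v w p.2))
      (fun p => (Equiv.swap v w p.1, Equiv.swap v w p.2)) ?_ ?_ ?_ ?_
    · rintro ⟨s, t⟩ hp
      simp only [IS, TS, Finset.mem_coe, Finset.mem_filter, Finset.mem_univ, true_and] at hp ⊢
      unfold IntM at hp ⊢
      simp only [key2, Equiv.swap_apply_self] at hp ⊢
      refine ⟨hp.1, ?_, ?_, hp.2.2.2⟩
      · rintro rfl; simp at hp
      · rintro rfl; simp at hp
    · rintro ⟨s, t⟩ hp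
      simp only [IS, TS, Finset.mem_coe, Finset.mem_filter, Finset.mem_univ, true_and] at hp ⊢
      unfold IntM at hp ⊢
      simpa [key2] using hp
    · rintro ⟨s, t⟩ hp; simp
    · rintro ⟨s, t⟩ hp; simp
  · refine Finset.card_nbij' (fun p => (Equiv.swap v w p.1, Equiv.swap v w p.2))
      (fun p => (Equiv.swap v w p.1, Equiv.swap v w p.2)) ?_ ?_ ?_ ?_
    · rintro ⟨s, t⟩ hp
      simp only [TS, Finset.mem_coe, Finset.mem_filter, Finset.mem_univ, true_and, key2] at hp ⊢
      exact hp
    · rintro ⟨s, t⟩ hp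
      simp only [TS, Finset.mem_coe, Finset.mem_filter, Finset.mem_univ, true_and, key] at hp ⊢
      exact hp
    · rintro ⟨s, t⟩ hp; simp
    · rintro ⟨s, t⟩ hp; simp

lemma part1 (h1 : 1 ≤ v.val) (hs : w.val = v.val + 1) (k : ℕ) :
    ∑ f ∈ (VF n).filter (fun f => ¬ f w = v), Wt f * dl k v w f = 0 := by
  by_cases hv : 2 ≤ v.val
  · have e : ∑ f ∈ (VF n).filter (fun f => ¬ f w = v), Wt f * dl k v w f =
        ∑ f ∈ (VF n).filter (fun f => ¬ f w = v), -(Wt f * dl k v w f) := by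
      have m : ∀ f ∈ (VF n).filter (fun f => ¬ f w = v), rel v w f ∈ (VF n).filter (fun f => ¬ f w = v) := by
        intro f hf
        simp only [VF, Finset.mem_filter, Finset.mem_univ, true_and] at hf ⊢
        exact rel_val hv hs hf.1 hf.2
      refine Finset.sum_nbij' (rel v w) (rel v w) m m (fun f _ => rel_rel) (fun f _ => rel_rel) ?_
      intro f hf
      simp only [VF, Finset.mem_filter, Finset.mem_univ, true_and] at hf
      rw [Wt_rel hv hs hf.1 hf.2]
      have a := BC_rel hv hs hf.1 hf.2 k v
      have b := BC_rel hv hs hf.1 hf.2 k w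
      rw [Equiv.swap_apply_left] at a
      rw [Equiv.swap_apply_right] at b
      unfold dl
      rw [a, b]; ring
    rw [Finset.sum_neg_distrib] at e
    linarith
  · apply Finset.sum_eq_zero
    intro f hf
    simp only [VF, Finset.mem_filter, Finset.mem_univ, true_and] at hf
    have := hf.1.2 w (by omega)
    exact absurd (Fin.ext (by omega)) hf.2

def EB (n k : ℕ) (v : Fin (n+1)) : ℚ := ∑ f ∈ VF n, probPF n f * BCPF n f k v

lemma EB_succ (hn : 3 ≤ n) (h1 : 1 ≤ v.val) (hs : w.val = v.val + 1) {k : ℕ} (hk : 2 ≤ k) :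
    EB n k w < EB n k v := by
  rw [← sub_pos]
  unfold EB
  rw [← Finset.sum_sub_distrib]
  have e : ∀ f, probPF n f * BCPF n f k v - probPF n f * BCPF n f k w = (Wt f * dl k v w f) / Kc n := by
    intro f
    rw [prob_eq]; unfold dl; ring
  simp only [e]
  rw [← Finset.sum_div]
  apply div_pos _ Kc_pos
  rw [← Finset.sum_filter_add_sum_filter_not (VF n) (fun f => f w = v), part1 h1 hs, add_zero]
  exact part2 hn h1 hs hk

lemma EB_lt (hn : 3 ≤ n) {k : ℕ} (hk : 2 ≤ k) (v : Fin (n+1)) (h1 : 1 ≤ v.val) : ∀ (j : ℕ) (w : Fin (n+1)),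
    w.val = v.val + 1 + j → EB n k w < EB n k v := by
  intro j
  induction j with
  | zero => intro w hw; exact EB_succ hn h1 hw hk
  | succ j ih =>
    intro w hw
    have := w.isLt
    exact (EB_succ (v := ⟨v.val + 1 + j, by omega⟩) hn (by simp; omega) (by simp; omega) hk).trans
      (ih ⟨v.val + 1 + j, by omega⟩ rfl)

end

/-- In the scale-free random recursive tree `T_n` (`n ≥ 3`), for vertices
`1 ≤ v < w ≤ n` and `2 ≤ k < n`, the expected `k`-betweenness centrality of `v`
strictly exceeds that of `w`. -/
theorem expected_BC_strictly_decreasing (n : ℕ) (hn : 3 ≤ n) (v w : Fin (n+1))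
    (hv : 1 ≤ v.val) (hvw : v < w) (k : ℕ) (hk2 : 2 ≤ k) (hkn : k < n) :
    ∑ f ∈ Finset.univ.filter (fun f : Fin (n+1) → Fin (n+1) => ValidPF n f),
        probPF n f * BCPF n f k v
      > ∑ f ∈ Finset.univ.filter (fun f : Fin (n+1) → Fin (n+1) => ValidPF n f),
        probPF n f * BCPF n f k w := by
  have hl := Fin.lt_def.1 hvw
  exact EB_lt hn hk2 v hv (w.val - (v.val + 1)) w (by omega)

end
end

section
/- Let n ≥ 2 and let x_0, x_1, …, x_p (p ≥ 1) be distinct vertices in {1,…,n} forming a valley-shaped sequence: there is an index m with 0 ≤ m ≤ p such that x_0 > x_1 > … > x_m and x_m < x_{m+1} < … < x_p. Set a = min(x_0, x_p), b = max(x_0, x_p), c = x_m, L = {x_q : 0 < q < p, c < x_q < a}, and R = {x_q : 0 < q < p, a < x_q < b}. Then the probability (under the scale-free random tree distribution P_n) that x_0, x_1, …, x_p is a path in T_n^f, i.e. that f(max(x_q, x_{q+1})) = min(x_q, x_{q+1}) for all 0 ≤ q < p, equals: (2/(2c−1)) · (1/(2b−2)) · ∏_{i∈L} 1/(2i−1)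 · ∏_{i∈R} 1/(2i−2) · ∏_{t=a+1}^{b} (2t−2)/(2t−3) if a ≠ c, and (1/(2b−2)) · ∏_{i∈R} 1/(2i−2) · ∏_{t=a+1}^{b} (2t−2)/(2t−3) if a = c. -/
open scoped Classical

noncomputable section

/-- Extension of a parent function to the natural numbers (0 outside the domain). -/
def fext (n : ℕ) (f : Fin (n+1) → Fin (n+1)) (t : ℕ) : ℕ :=
  if h : t < n + 1 then (f ⟨t, h⟩).val else 0

namespace PAux

def deg (f : ℕ → ℕ) (m v : ℕ) : ℕ := 1 + ((Finset.Icc 2 m).filter (fun s => f s = v)).card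
def prob (f : ℕ → ℕ) (m : ℕ) : ℚ :=
  ∏ t ∈ Finset.Icc 2 m, (deg f (t-1) (f t) : ℚ) / (2 * (t : ℚ) - 3)
def FF : ℕ → Finset (ℕ → ℕ)
  | 0 => {0}
  | 1 => {0}
  | (m+2) => (FF (m+1) ×ˢ Finset.Icc 1 (m+1)).image (fun p => Function.update p.1 (m+2) p.2)

lemma mem_FF (m : ℕ) (hm : 1 ≤ m) (f : ℕ → ℕ) : f ∈ FF m ↔
    (∀ t, t < 2 ∨ m < t → f t = 0) ∧ (∀ t, 2 ≤ t → t ≤ m → 1 ≤ f t ∧ f t < t) := by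
  induction m, hm using Nat.le_induction generalizing f with
  | base =>
    simp only [FF, Finset.mem_singleton]
    constructor
    · rintro rfl; exact ⟨fun _ _ => rfl, fun t h1 h2 => by omega⟩
    · rintro ⟨h, -⟩; funext t; exact h t (by omega)
  | succ m hm ih =>
    obtain ⟨m, rfl⟩ : ∃ k, m = k + 1 := ⟨m - 1, by omega⟩
    simp only [FF, Finset.mem_image, Finset.mem_product, Finset.mem_Icc, Prod.exists]
    constructor
    · rintro ⟨h, v, ⟨hh, hv⟩, rfl⟩
      rw [ih] at hh
      refine ⟨fun t ht => ?_, fun t h1 h2 => ?_⟩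
      · rw [Function.update_of_ne (by omega)]; exact hh.1 t (by omega)
      · by_cases h : t = m + 2
        · subst h; simp; omega
        · rw [Function.update_of_ne h]; exact hh.2 t h1 (by omega)
    · rintro ⟨h1, h2⟩
      refine ⟨Function.update f (m+2) 0, f (m+2), ⟨?_, ?_⟩, by simp⟩
      · rw [ih]
        refine ⟨fun t ht => ?_, fun t h3 h4 => ?_⟩
        · by_cases h : t = m + 2
          · subst h; simp
          · rw [Function.update_of_ne h]; exact h1 t (by omega)
        · rw [Function.update_of_ne (by omega)]; exact h2 t h3 (by omega)
      · have := h2 (m+2) (by omega) (by omega); omega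

lemma sum_FF (m : ℕ) (hm : 1 ≤ m) (φ : (ℕ → ℕ) → ℚ) :
    ∑ f ∈ FF (m+1), φ f = ∑ f ∈ FF m, ∑ v ∈ Finset.Icc 1 m, φ (Function.update f (m+1) v) := by
  have hm' := hm
  obtain ⟨m, rfl⟩ : ∃ k, m = k + 1 := ⟨m - 1, by omega⟩
  rw [← Finset.sum_product', FF, Finset.sum_image]
  rintro ⟨f, v⟩ h1 ⟨f', v'⟩ h2 h
  simp only [Finset.coe_product, Set.mem_prod, Finset.mem_coe, mem_FF _ hm'] at h1 h2 h
  have hv : v = v' := by simpa using congrFun h (m+2)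
  have hf : f = f' := by
    funext t
    by_cases ht : t = m + 2
    · rw [h1.1.1 t (by omega), h2.1.1 t (by omega)]
    · simpa [ht] using congrFun h t
  rw [hv, hf]

lemma deg_update (f : ℕ → ℕ) (m v u j : ℕ) (h : j ≤ m) :
    deg (Function.update f (m+1) v) j u = deg f j u := by
  unfold deg
  congr 2
  apply Finset.filter_congr
  intro s hs
  simp only [Finset.mem_Icc] at hs
  rw [Function.update_of_ne (by omega)]

lemma deg_update' (f : ℕ → ℕ) (m v u : ℕ) (hm : 1 ≤ m) :
    deg (Function.update f (m+1) v) (m+1) u = deg f m u + if u = v then 1 else 0 := by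
  rw [← deg_update f m v u m le_rfl]
  unfold deg
  rw [← Finset.insert_Icc_right_eq_Icc_add_one (by omega), Finset.filter_insert]
  by_cases h : u = v
  · subst h
    simp
    omega
  · have : v ≠ u := fun h' => h h'.symm
    simp [h, this]

lemma prob_update (f : ℕ → ℕ) (m v : ℕ) (hm : 1 ≤ m) :
    prob (Function.update f (m+1) v) (m+1) = prob f m * ((deg f m v : ℚ) / (2*(m:ℚ) - 1)) := by
  unfold prob
  rw [Finset.prod_Icc_succ_top (by omega)]
  congr 1
  · apply Finset.prod_congr rfl
    intro t ht
    simp only [Finset.mem_Icc] at ht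
    obtain ⟨k, rfl⟩ : ∃ k, m = k + 1 := ⟨m-1, by omega⟩
    rw [deg_update _ _ _ _ _ (by omega), Function.update_of_ne (by omega)]
  · rw [Function.update_self, Nat.add_sub_cancel, deg_update _ _ _ _ _ le_rfl]
    push_cast
    congr 1
    ring

lemma deg_top (f : ℕ → ℕ) (m : ℕ) (hm : 1 ≤ m) (hf : f ∈ FF m) (u : ℕ) (hu : m ≤ u) :
    deg f m u = 1 := by
  rw [mem_FF _ hm] at hf
  unfold deg
  rw [Finset.filter_eq_empty_iff.2]
  · rfl
  intro s hs
  simp only [Finset.mem_Icc] at hs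
  have := hf.2 s hs.1 hs.2
  omega

lemma sum_deg (f : ℕ → ℕ) (m : ℕ) (hm : 1 ≤ m) (hf : f ∈ FF m) :
    ∑ v ∈ Finset.Icc 1 m, (deg f m v : ℚ) = 2 * m - 1 := by
  rw [mem_FF _ hm] at hf
  have h : (Finset.Icc 2 m).card = ∑ v ∈ Finset.Icc 1 m, ((Finset.Icc 2 m).filter (fun s => f s = v)).card := by
    apply Finset.card_eq_sum_card_fiberwise
    intro s hs
    simp only [Finset.coe_Icc, Set.mem_Icc] at hs ⊢
    have := hf.2 s hs.1 hs.2
    omega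
  have h2 : ∑ v ∈ Finset.Icc 1 m, deg f m v + 1 = 2 * m := by
    unfold deg
    rw [Finset.sum_add_distrib, ← h]
    simp
    omega
  have := congrArg (Nat.cast : ℕ → ℚ) h2
  push_cast at this
  linarith

lemma asc_one (U : Finset ℕ) (d k : ℕ → ℕ) (v : ℕ) (hv : v ∈ U) :
    d v * ∏ u ∈ U, (d u + if u = v then 1 else 0).ascFactorial (k u)
      = (d v + k v) * ∏ u ∈ U, (d u).ascFactorial (k u) := by
  rw [← Finset.mul_prod_erase _ _ hv, ← Finset.mul_prod_erase U (fun u => (d u).ascFactorial (k u)) hv,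
    ← mul_assoc, ← mul_assoc]
  congr 1
  · simp only [if_true]
    exact Nat.succ_ascFactorial _ _
  · apply Finset.prod_congr rfl
    intro u hu
    rw [if_neg (Finset.ne_of_mem_erase hu), add_zero]

lemma asc_two (U : Finset ℕ) (d k : ℕ → ℕ) (v : ℕ) (hv : v ∈ U) :
    d v * ∏ u ∈ U, (d u + if u = v then 1 else 0).ascFactorial (k u)
      = ∏ u ∈ U, (d u).ascFactorial (k u + if u = v then 1 else 0) := by
  rw [asc_one U d k v hv]
  rw [← Finset.mul_prod_erase _ _ hv, ← Finset.mul_prod_erase U (fun u => (d u).ascFactorial (k u + _)) hv,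
    ← mul_assoc]
  congr 1
  · simp only [if_true]
    exact (Nat.ascFactorial_succ).symm
  · apply Finset.prod_congr rfl
    intro u hu
    rw [if_neg (Finset.ne_of_mem_erase hu), add_zero]

def kk (S : Finset ℕ) (g : ℕ → ℕ) (m v : ℕ) : ℕ := (S.filter (fun s => m < s ∧ g s = v)).card
def KK (S : Finset ℕ) (g : ℕ → ℕ) (t : ℕ) : ℕ := (S.filter (fun s => t ≤ s ∧ g s < t)).card
def fac (S : Finset ℕ) (g : ℕ → ℕ) (t : ℕ) : ℚ :=
  (if t ∈ S then 1 else 2 * (t:ℚ) - 3 + KK S g t) / (2 * (t:ℚ) - 3)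

def AA (S : Finset ℕ) (g : ℕ → ℕ) (m : ℕ) : ℚ :=
  ∑ f ∈ FF m, if (∀ s ∈ S, s ≤ m → f s = g s) then
    prob f m * ((∏ v ∈ Finset.Icc 1 m, (deg f m v).ascFactorial (kk S g m v) : ℕ) : ℚ) else 0

lemma sum_kk (S : Finset ℕ) (g : ℕ → ℕ) (hg : ∀ s ∈ S, 1 ≤ g s ∧ g s < s) (m : ℕ) :
    ∑ v ∈ Finset.Icc 1 m, kk S g m v = KK S g (m+1) := by
  unfold KK kk
  rw [Finset.card_eq_sum_card_fiberwise (f := g) (t := Finset.Icc 1 m)]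
  · apply Finset.sum_congr rfl
    intro v hv
    simp only [Finset.mem_Icc] at hv
    congr 1
    ext s
    simp only [Finset.mem_filter]
    constructor
    · rintro ⟨h1, h2, h3⟩; exact ⟨⟨h1, by omega, by omega⟩, h3⟩
    · rintro ⟨⟨h1, h2, h4⟩, h3⟩; exact ⟨h1, by omega, h3⟩
  · intro s hs
    simp only [Finset.coe_filter, Set.mem_ofPred_eq, Finset.coe_Icc, Set.mem_Icc] at hs ⊢
    have := hg s hs.1
    omega

lemma AA_succ (S : Finset ℕ) (g : ℕ → ℕ) (hg : ∀ s ∈ S, 1 ≤ g s ∧ g s < s) (m : ℕ) (hm : 1 ≤ m) :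
    AA S g (m+1) = AA S g m * (((kk S g (m+1) (m+1)).factorial : ℚ) * fac S g (m+1)) := by
  unfold AA
  rw [sum_FF m hm, Finset.sum_mul]
  apply Finset.sum_congr rfl
  intro f hf
  have key : ∀ v ∈ Finset.Icc 1 m, (∏ u ∈ Finset.Icc 1 (m+1),
      (deg (Function.update f (m+1) v) (m+1) u).ascFactorial (kk S g (m+1) u)) =
      (∏ u ∈ Finset.Icc 1 m, (deg f m u + if u = v then 1 else 0).ascFactorial (kk S g (m+1) u)) *
       (kk S g (m+1) (m+1)).factorial := by
    intro v hv
    simp only [Finset.mem_Icc] at hv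
    rw [Finset.prod_Icc_succ_top (by omega)]
    simp only [deg_update' _ _ _ _ hm]
    rw [deg_top f m hm hf (m+1) (by omega), if_neg (by omega), add_zero, Nat.one_ascFactorial]
  have hc : ∀ v, (∀ s ∈ S, s ≤ m + 1 → Function.update f (m+1) v s = g s) ↔
      ((∀ s ∈ S, s ≤ m → f s = g s) ∧ (m + 1 ∈ S → v = g (m+1))) := by
    intro v
    constructor
    · intro h
      refine ⟨fun s hs hsm => ?_, fun hs => ?_⟩
      · have := h s hs (by omega)
        rwa [Function.update_of_ne (by omega)] at this
      · simpa using h _ hs le_rfl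
    · rintro ⟨h1, h2⟩ s hs hsm
      by_cases h : s = m + 1
      · subst h; simpa using h2 hs
      · rw [Function.update_of_ne h]; exact h1 s hs (by omega)
  simp only [hc]
  by_cases hC : ∀ s ∈ S, s ≤ m → f s = g s
  swap
  · simp [hC]
  rw [if_pos hC]
  simp only [eq_true hC, true_and]
  have hm0 : (2 * (m:ℚ) - 1) ≠ 0 := by
    have : (1:ℚ) ≤ m := by exact_mod_cast hm
    linarith
  have hden : (2 * ((m+1 : ℕ):ℚ) - 3) = 2 * (m:ℚ) - 1 := by push_cast; ring
  by_cases hS : m + 1 ∈ S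
  · have hgm := hg _ hS
    simp only [hS, true_imp_iff]
    have hmem : g (m+1) ∈ Finset.Icc 1 m := by simp only [Finset.mem_Icc]; omega
    rw [Finset.sum_ite_eq' , if_pos hmem, prob_update _ _ _ hm, key _ hmem]
    have h2 := asc_two (Finset.Icc 1 m) (deg f m) (kk S g (m+1)) _ hmem
    have h3 : ∀ u, kk S g m u = kk S g (m+1) u + if u = g (m+1) then 1 else 0 := by
      intro u
      unfold kk
      have : S.filter (fun s => m < s ∧ g s = u) =
        if u = g (m+1) then insert (m+1) (S.filter (fun s => m + 1 < s ∧ g s = u))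
          else (S.filter (fun s => m + 1 < s ∧ g s = u)) := by
        ext s
        split_ifs with h
        · simp only [Finset.mem_filter, Finset.mem_insert]
          constructor
          · rintro ⟨h1, h2, h3⟩
            by_cases h' : s = m + 1
            · exact Or.inl h'
            · exact Or.inr ⟨h1, by omega, h3⟩
          · rintro (rfl | ⟨h1, h2, h3⟩)
            · exact ⟨hS, by omega, h.symm⟩
            · exact ⟨h1, by omega, h3⟩
        · simp only [Finset.mem_filter]
          constructor
          · rintro ⟨h1, h2, h3⟩
            refine ⟨h1, ?_, h3⟩
            have : s ≠ m + 1 := by rintro rfl; exact h h3.symm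
            omega
          · rintro ⟨h1, h2, h3⟩; exact ⟨h1, by omega, h3⟩
      rw [this]
      split_ifs with h
      · rw [Finset.card_insert_of_notMem (by simp)]
      · simp
    simp only [h3]
    rw [← h2]
    unfold fac
    rw [if_pos hS, hden]
    push_cast
    field_simp
  · simp only [hS, false_imp_iff, if_true]
    have h3 : ∀ u, kk S g m u = kk S g (m+1) u := by
      intro u
      unfold kk
      congr 1
      apply Finset.filter_congr
      intro s hs
      have : s ≠ m + 1 := by rintro rfl; exact hS hs
      constructor
      · rintro ⟨h1, h2⟩; exact ⟨by omega, h2⟩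
      · rintro ⟨h1, h2⟩; exact ⟨by omega, h2⟩
    have h4 : ∀ v ∈ Finset.Icc 1 m, prob (Function.update f (m+1) v) (m+1) * ((∏ u ∈ Finset.Icc 1 (m+1),
      (deg (Function.update f (m+1) v) (m+1) u).ascFactorial (kk S g (m+1) u) : ℕ) : ℚ) =
      ((deg f m v : ℚ) + (kk S g m v : ℕ)) * (prob f m / (2 * (m:ℚ) - 1) * ((∏ u ∈ Finset.Icc 1 m, (deg f m u).ascFactorial (kk S g m u) : ℕ) : ℚ)
        * ((kk S g (m+1) (m+1)).factorial : ℚ)) := by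
      intro v hv
      rw [key v hv, prob_update _ _ _ hm]
      have h2 := congrArg (Nat.cast : ℕ → ℚ) (asc_one (Finset.Icc 1 m) (deg f m) (kk S g (m+1)) _ hv)
      simp only [← h3] at h2 ⊢
      rw [Nat.cast_mul, Nat.cast_mul, Nat.cast_add] at h2
      rw [Nat.cast_mul]
      field_simp
      linear_combination (prob f m) * h2
    rw [Finset.sum_congr rfl h4, ← Finset.sum_mul, Finset.sum_add_distrib, sum_deg f m hm hf,
      ← Nat.cast_sum, sum_kk S g hg]
    unfold fac
    rw [if_neg hS, hden]
    field_simp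

lemma AA_eq (S : Finset ℕ) (g : ℕ → ℕ) (hS : ∀ s ∈ S, 2 ≤ s) (hg : ∀ s ∈ S, 1 ≤ g s ∧ g s < s) (m : ℕ) (hm : 1 ≤ m) :
    AA S g m = (∏ v ∈ Finset.Icc 1 m, ((kk S g v v).factorial : ℚ)) * ∏ t ∈ Finset.Icc 2 m, fac S g t := by
  induction m, hm using Nat.le_induction with
  | base =>
    have : ∀ s ∈ S, s ≤ 1 → (0 : ℕ → ℕ) s = g s := fun s hs h => by have := hS s hs; omega
    simp only [AA, FF, Finset.sum_singleton]
    rw [if_pos this]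
    simp [prob, deg, Nat.one_ascFactorial]
  | succ m hm ih =>
    rw [AA_succ S g hg m hm, ih, Finset.prod_Icc_succ_top (by omega), Finset.prod_Icc_succ_top (by omega)]
    ring

lemma main (S : Finset ℕ) (g : ℕ → ℕ) (n : ℕ) (hn : 2 ≤ n) (hS : ∀ s ∈ S, 2 ≤ s ∧ s ≤ n) (hg : ∀ s ∈ S, 1 ≤ g s ∧ g s < s) :
    ∑ f ∈ (FF n).filter (fun f => ∀ s ∈ S, f s = g s), prob f n =
    (∏ v ∈ Finset.Icc 1 n, ((S.filter (fun s => g s = v)).card.factorial : ℚ)) * ∏ t ∈ Finset.Icc 2 n, fac S g t := by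
  have := AA_eq S g (fun s hs => (hS s hs).1) hg n (by omega)
  have hk : ∀ v, kk S g v v = (S.filter (fun s => g s = v)).card := by
    intro v
    unfold kk
    congr 1
    apply Finset.filter_congr
    intro s hs
    have := hg s hs
    omega
  simp only [hk] at this
  rw [← this, AA, Finset.sum_filter]
  apply Finset.sum_congr rfl
  intro f hf
  have h1 : (∀ s ∈ S, f s = g s) ↔ (∀ s ∈ S, s ≤ n → f s = g s) :=
    ⟨fun h s hs _ => h s hs, fun h s hs => h s hs (hS s hs).2⟩
  have h2 : ∀ v, kk S g n v = 0 := by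
    intro v
    unfold kk
    rw [Finset.card_eq_zero, Finset.filter_eq_empty_iff]
    intro s hs
    have := hS s hs
    omega
  simp only [h2, Nat.ascFactorial_zero, Finset.prod_const_one, Nat.cast_one, mul_one]
  by_cases h : ∀ s ∈ S, f s = g s
  · rw [if_pos h, if_pos (h1.1 h)]
  · rw [if_neg h, if_neg (fun h' => h (h1.2 h'))]

lemma fext_val (n : ℕ) (f : Fin (n+1) → Fin (n+1)) (t : Fin (n+1)) : fext n f t.val = (f t).val := by
  unfold fext
  rw [dif_pos t.isLt]

lemma degPF_eq (n : ℕ) (f : Fin (n+1) → Fin (n+1)) (m : ℕ) (hm : m ≤ n) (v : Fin (n+1)) :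
    degPF n f m v = deg (fext n f) m v.val := by
  unfold degPF deg
  congr 1
  apply Finset.card_bij (fun s _ => s.val)
  · intro s hs
    simp only [Finset.mem_filter, Finset.mem_univ, true_and, Finset.mem_Icc] at hs ⊢
    rw [fext_val, hs.2.2]
    exact ⟨⟨hs.1, hs.2.1⟩, rfl⟩
  · intro s _ t _ h
    exact Fin.ext h
  · intro s hs
    simp only [Finset.mem_filter, Finset.mem_Icc] at hs
    refine ⟨⟨s, by omega⟩, ?_, rfl⟩
    simp only [Finset.mem_filter, Finset.mem_univ, true_and]
    refine ⟨hs.1.1, hs.1.2, ?_⟩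
    apply Fin.ext
    rw [← fext_val]
    exact hs.2

lemma probPF_eq (n : ℕ) (f : Fin (n+1) → Fin (n+1)) : probPF n f = prob (fext n f) n := by
  unfold probPF prob
  apply Finset.prod_bij (fun s _ => s.val)
  · intro s hs
    simp only [Finset.mem_filter, Finset.mem_univ, true_and, Finset.mem_Icc] at hs ⊢
    exact ⟨hs, by omega⟩
  · intro s _ t _ h
    exact Fin.ext h
  · intro s hs
    simp only [Finset.mem_Icc] at hs
    exact ⟨⟨s, by omega⟩, by simpa using hs.1, rfl⟩
  · intro s hs
    rw [degPF_eq _ _ _ (by omega), fext_val]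

lemma sum_bridge (n : ℕ) (hn : 2 ≤ n) (Q : (ℕ → ℕ) → Prop) :
    ∑ f ∈ Finset.univ.filter (fun f : Fin (n+1) → Fin (n+1) => ValidPF n f ∧ Q (fext n f)), probPF n f
     = ∑ f ∈ (FF n).filter Q, prob f n := by
  apply Finset.sum_bij (fun f _ => fext n f)
  · intro f hf
    simp only [Finset.mem_filter, Finset.mem_univ, true_and] at hf ⊢
    refine ⟨?_, hf.2⟩
    rw [mem_FF n (by omega)]
    refine ⟨fun t ht => ?_, fun t h1 h2 => ?_⟩
    · by_cases h : t < n + 1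
      · rw [fext_val n f ⟨t, h⟩]
        exact hf.1.1 _ (by simp only; omega)
      · unfold fext; rw [dif_neg h]
    · rw [fext_val n f ⟨t, by omega⟩]
      exact hf.1.2 ⟨t, by omega⟩ h1
  · intro f _ f' _ h
    funext t
    apply Fin.ext
    rw [← fext_val, ← fext_val, h]
  · intro g hg
    simp only [Finset.mem_filter, mem_FF n (by omega : 1 ≤ n)] at hg
    have hlt : ∀ t, g t < n + 1 := by
      intro t
      by_cases h : t < 2 ∨ n < t
      · rw [hg.1.1 t h]; omega
      · have := hg.1.2 t (by omega) (by omega); omega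
    have he : fext n (fun t => ⟨g t.val, hlt _⟩) = g := by
      funext t
      unfold fext
      split_ifs with h
      · rfl
      · exact (hg.1.1 t (by omega)).symm
    refine ⟨fun t => ⟨g t.val, hlt _⟩, ?_, he⟩
    simp only [Finset.mem_filter, Finset.mem_univ, true_and]
    rw [he]
    refine ⟨⟨fun t ht => hg.1.1 _ (Or.inl ht), fun t ht => hg.1.2 _ ht (by omega)⟩, hg.2⟩
  · intro f _
    exact probPF_eq n f

lemma telescope (c a : ℕ) (hc : 1 ≤ c) (h : c ≤ a) :
    ∏ t ∈ Finset.Icc (c+1) a, (2*(t:ℚ) - 1) / (2*(t:ℚ)-3) = (2*(a:ℚ) - 1)/(2*(c:ℚ)-1) := by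
  induction a, h using Nat.le_induction with
  | base =>
    have : (1:ℚ) ≤ c := by exact_mod_cast hc
    rw [div_self (by linarith)]
    simp
  | succ a h ih =>
    have h1 : (1:ℚ) ≤ c := by exact_mod_cast hc
    have h2 : (c:ℚ) ≤ a := by exact_mod_cast h
    rw [Finset.prod_Icc_succ_top (by omega), ih]
    push_cast
    have h3 : 2 * (c:ℚ) - 1 ≠ 0 := by linarith
    have h4 : 2 * ((a:ℚ)+1) - 3 ≠ 0 := by linarith
    field_simp
    ring

/-- The common intermediate form. -/
lemma path_main (n p : ℕ) (hn : 2 ≤ n) (hp : 1 ≤ p)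
    (x : ℕ → ℕ) (hrange : ∀ q ≤ p, 1 ≤ x q ∧ x q ≤ n)
    (hdistinct : ∀ q ≤ p, ∀ q' ≤ p, q ≠ q' → x q ≠ x q')
    (m : ℕ) (hm : m ≤ p)
    (hdec : ∀ q, q < m → x (q+1) < x q)
    (hinc : ∀ q, m ≤ q → q < p → x q < x (q+1))
    (a b c : ℕ) (ha : a = min (x 0) (x p)) (hb : b = max (x 0) (x p)) (hc : c = x m)
    (L R : Finset ℕ)
    (hL : L = ((Finset.Ioo 0 p).filter (fun q => c < x q ∧ x q < a)).image x)
    (hR : R = ((Finset.Ioo 0 p).filter (fun q => a < x q ∧ x q < b)).image x) :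
    ∑ f ∈ Finset.univ.filter (fun f : Fin (n+1) → Fin (n+1) => ValidPF n f ∧
          ∀ q < p, fext n f (max (x q) (x (q+1))) = min (x q) (x (q+1))),
        probPF n f
      = (if a = c then 1 else 2 * (1 / (2 * (a:ℚ) - 1))) * ((2*(a:ℚ) - 1)/(2*(c:ℚ)-1)) * (1 / (2*(b : ℚ) - 2)) *
        (∏ i ∈ L, 1 / (2*(i : ℚ) - 1)) * (∏ i ∈ R, 1 / (2*(i : ℚ) - 2)) *
        (∏ t ∈ Finset.Icc (a+1) b, (2*(t : ℚ) - 2) / (2*(t : ℚ) - 3)) := by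
  trans ∑ f ∈ (FF n).filter (fun f => ∀ q < p, f (max (x q) (x (q+1))) = min (x q) (x (q+1))), prob f n
  · convert sum_bridge n hn (fun f => ∀ q < p, f (max (x q) (x (q+1))) = min (x q) (x (q+1)))
  have inj : ∀ q ≤ p, ∀ q' ≤ p, x q = x q' → q = q' := fun q hq q' hq' h => by
    by_contra h'; exact hdistinct q hq q' hq' h' h
  set σ : ℕ → ℕ := fun q => if q < m then q else q + 1 with hσ
  set τ : ℕ → ℕ := fun q => if q < m then q + 1 else q with hτ
  have hmax : ∀ q < p, max (x q) (x (q+1)) = x (σ q) := by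
    intro q hq
    simp only [hσ]
    split_ifs with h
    · exact max_eq_left (hdec q h).le
    · exact max_eq_right (hinc q (by omega) hq).le
  have hmin : ∀ q < p, min (x q) (x (q+1)) = x (τ q) := by
    intro q hq
    simp only [hτ]
    split_ifs with h
    · exact min_eq_right (hdec q h).le
    · exact min_eq_left (hinc q (by omega) hq).le
  have hlt : ∀ q < p, x (τ q) < x (σ q) := by
    intro q hq
    simp only [hσ, hτ]
    split_ifs with h
    · exact hdec q h
    · exact hinc q (by omega) hq
  have hσp : ∀ q < p, σ q ≤ p := by
    intro q hq; simp only [hσ]; split_ifs <;> omega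
  have hτp : ∀ q < p, τ q ≤ p := by
    intro q hq; simp only [hτ]; split_ifs <;> omega
  have hinj : Set.InjOn (fun q => x (σ q)) (Finset.range p : Set ℕ) := by
    intro q hq q' hq' h
    simp only [Finset.coe_range, Set.mem_Iio] at hq hq'
    have := inj _ (hσp q hq) _ (hσp q' hq') h
    simp only [hσ] at this
    split_ifs at this <;> omega
  set S : Finset ℕ := (Finset.range p).image (fun q => x (σ q)) with hS
  obtain ⟨g, hg⟩ : ∃ g : ℕ → ℕ, ∀ q < p, g (x (σ q)) = x (τ q) := by
    refine ⟨fun s => x (τ (Function.invFunOn (fun q => x (σ q)) (Finset.range p : Set ℕ) s)), ?_⟩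
    intro q hq
    have := hinj.leftInvOn_invFunOn (by simpa using hq : q ∈ (Finset.range p : Set ℕ))
    simp only [this]
  have hcard : ∀ (P : ℕ → ℕ → Prop) [∀ s u, Decidable (P s u)], (S.filter (fun s => P s (g s))).card =
      ((Finset.range p).filter (fun q => P (x (σ q)) (x (τ q)))).card := by
    intro P _
    rw [Finset.card_filter, hS, Finset.sum_image hinj, Finset.card_filter]
    apply Finset.sum_congr rfl
    intro q hq
    rw [hg q (by simpa using hq)]
  have hmemS : ∀ s, s ∈ S ↔ ∃ q ≤ p, q ≠ m ∧ x q = s := by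
    intro s
    simp only [hS, Finset.mem_image, Finset.mem_range]
    constructor
    · rintro ⟨q, hq, rfl⟩
      refine ⟨σ q, hσp q hq, ?_, rfl⟩
      simp only [hσ]; split_ifs <;> omega
    · rintro ⟨q, hq, hqm, rfl⟩
      by_cases h : q < m
      · exact ⟨q, by omega, by simp only [hσ, if_pos h]⟩
      · refine ⟨q - 1, by omega, ?_⟩
        simp only [hσ]
        rw [if_neg (by omega), Nat.sub_add_cancel (by omega)]
  -- monotonicity
  have mono1 : ∀ q, q ≤ m → x q ≤ x 0 := by
    intro q
    induction q with
    | zero => intro _; exact le_rfl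
    | succ q ih => intro h; exact (hdec q h).le.trans (ih (by omega))
  have mono2 : ∀ d, d ≤ m → x m ≤ x (m - d) := by
    intro d
    induction d with
    | zero => intro _; exact le_rfl
    | succ d ih =>
      intro h
      have h1 := hdec (m - (d+1)) (by omega)
      rw [show m - (d+1) + 1 = m - d by omega] at h1
      exact (ih (by omega)).trans h1.le
  have mono3 : ∀ d, m + d ≤ p → x m ≤ x (m + d) := by
    intro d
    induction d with
    | zero => intro _; exact le_rfl
    | succ d ih => intro h; exact (ih (by omega)).trans (hinc (m+d) (by omega) (by omega)).le
  have mono4 : ∀ d, d ≤ p - m → x (p - d) ≤ x p := by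
    intro d
    induction d with
    | zero => intro _; exact le_rfl
    | succ d ih =>
      intro h
      have h1 := hinc (p - (d+1)) (by omega) (by omega)
      rw [show p - (d+1) + 1 = p - d by omega] at h1
      exact h1.le.trans (ih (by omega))
  have hge : ∀ q ≤ p, c ≤ x q := by
    intro q hq
    rw [hc]
    by_cases h : q ≤ m
    · have := mono2 (m - q) (by omega)
      rwa [show m - (m - q) = q by omega] at this
    · have := mono3 (q - m) (by omega)
      rwa [show m + (q - m) = q by omega] at this
  have hle : ∀ q ≤ p, x q ≤ b := by
    intro q hq
    rw [hb]
    by_cases h : q ≤ m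
    · exact (mono1 q h).trans (le_max_left _ _)
    · have := mono4 (p - q) (by omega)
      rw [show p - (p - q) = q by omega] at this
      exact this.trans (le_max_right _ _)
  have hgt : ∀ q ≤ p, q ≠ m → c < x q := by
    intro q hq hqm
    have h1 := hge q hq
    have h2 := hdistinct q hq m hm hqm
    omega
  have h0p : x 0 ≠ x p := hdistinct 0 (by omega) p le_rfl (by omega)
  have hab : a < b := by omega
  have hc1 : 1 ≤ c := by rw [hc]; exact (hrange m hm).1
  have hca : c ≤ a := by
    have := hge 0 (by omega)
    have := hge p le_rfl
    omega
  have hbn : b ≤ n := by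
    have := (hrange 0 (by omega)).2
    have := (hrange p le_rfl).2
    omega
  have hS2 : ∀ s ∈ S, 2 ≤ s ∧ s ≤ n := by
    intro s hs
    obtain ⟨q, hq, hqm, rfl⟩ := (hmemS s).1 hs
    have := hgt q hq hqm
    have := hrange q hq
    omega
  have hgS : ∀ s ∈ S, 1 ≤ g s ∧ g s < s := by
    intro s hs
    simp only [hS, Finset.mem_image, Finset.mem_range] at hs
    obtain ⟨q, hq, rfl⟩ := hs
    rw [hg q hq]
    exact ⟨(hrange _ (hτp q hq)).1, hlt q hq⟩
  have hfilt : (FF n).filter (fun f => ∀ q < p, f (max (x q) (x (q+1))) = min (x q) (x (q+1))) =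
      (FF n).filter (fun f => ∀ s ∈ S, f s = g s) := by
    apply Finset.filter_congr
    intro f _
    simp only [hS, Finset.mem_image, Finset.mem_range, forall_exists_index, and_imp,
      forall_apply_eq_imp_iff₂]
    constructor
    · intro h q hq
      rw [hg q hq, ← hmax q hq, ← hmin q hq]; exact h q hq
    · intro h q hq
      rw [hmax q hq, hmin q hq, ← hg q hq]; exact h q hq
  rw [hfilt, main S g n hn hS2 hgS]
  -- KK
  have hKK : ∀ t, (KK S g t : ℤ) = 2 * (if c < t then 1 else 0) - (if x 0 < t then 1 else 0)
      - (if x p < t then 1 else 0) := by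
    intro t
    unfold KK
    rw [hcard (fun s u => t ≤ s ∧ u < t), Finset.card_filter]
    push_cast
    obtain ⟨r, rfl⟩ : ∃ r, p = m + r := ⟨p - m, by omega⟩
    rw [Finset.sum_range_add]
    have e1 : ∀ q ∈ Finset.range m, (if t ≤ x (σ q) ∧ x (τ q) < t then (1:ℤ) else 0) =
        (if x (q+1) < t then 1 else 0) - (if x q < t then 1 else 0) := by
      intro q hq
      have hq' : q < m := by simpa using hq
      have := hdec q hq'
      simp only [hσ, hτ, if_pos hq']
      split_ifs <;> omega
    have e2 : ∀ q ∈ Finset.range r, (if t ≤ x (σ (m+q)) ∧ x (τ (m+q)) < t then (1:ℤ) else 0) =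
        (if x (m+q) < t then 1 else 0) - (if x (m+(q+1)) < t then 1 else 0) := by
      intro q hq
      have hq' : q < r := by simpa using hq
      have := hinc (m+q) (by omega) (by omega)
      simp only [hσ, hτ, if_neg (show ¬ (m + q < m) by omega), ← add_assoc]
      split_ifs <;> omega
    rw [Finset.sum_congr rfl e1, Finset.sum_congr rfl e2,
      Finset.sum_range_sub (fun q => if x q < t then (1:ℤ) else 0),
      Finset.sum_range_sub' (fun q => if x (m+q) < t then (1:ℤ) else 0), hc, add_zero]
    ring
  have hK1 : ∀ t, t ≤ c → KK S g t = 0 := by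
    intro t ht
    have := hKK t
    rw [if_neg (by omega), if_neg (by omega), if_neg (by omega)] at this
    omega
  have hK2 : ∀ t, c < t → t ≤ a → KK S g t = 2 := by
    intro t ht ht'
    have := hKK t
    rw [if_pos (by omega), if_neg (by omega), if_neg (by omega)] at this
    omega
  have hK3 : ∀ t, a < t → t ≤ b → KK S g t = 1 := by
    intro t ht ht'
    have := hKK t
    rw [if_pos (by omega)] at this
    split_ifs at this <;> omega
  have hK4 : ∀ t, b < t → KK S g t = 0 := by
    intro t ht
    have := hKK t
    rw [if_pos (by omega), if_pos (by omega), if_pos (by omega)] at this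
    omega
  -- factor product
  have hfac : ∏ t ∈ Finset.Icc 2 n, fac S g t =
      (∏ t ∈ Finset.Icc (c+1) a, (2*(t:ℚ) - 1) / (2*(t:ℚ)-3)) *
      (∏ t ∈ Finset.Icc (a+1) b, (2*(t:ℚ) - 2) / (2*(t:ℚ)-3)) *
      ((∏ t ∈ S.filter (fun t => t ≤ a), 1 / (2*(t:ℚ) - 1)) *
       (∏ t ∈ S.filter (fun t => ¬ t ≤ a), 1 / (2*(t:ℚ) - 2))) := by
    have r1 : Finset.Icc (c+1) a = (Finset.Icc 2 n).filter (fun t => c < t ∧ t ≤ a) := by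
      ext t; simp only [Finset.mem_Icc, Finset.mem_filter]; omega
    have r2 : Finset.Icc (a+1) b = (Finset.Icc 2 n).filter (fun t => a < t ∧ t ≤ b) := by
      ext t; simp only [Finset.mem_Icc, Finset.mem_filter]; omega
    have r3 : S.filter (fun t => t ≤ a) = (Finset.Icc 2 n).filter (fun t => t ∈ S ∧ t ≤ a) := by
      ext t; simp only [Finset.mem_Icc, Finset.mem_filter]
      constructor
      · rintro ⟨h1, h2⟩; exact ⟨hS2 t h1, h1, h2⟩
      · rintro ⟨_, h1, h2⟩; exact ⟨h1, h2⟩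
    have r4 : S.filter (fun t => ¬ t ≤ a) = (Finset.Icc 2 n).filter (fun t => t ∈ S ∧ ¬ t ≤ a) := by
      ext t; simp only [Finset.mem_Icc, Finset.mem_filter]
      constructor
      · rintro ⟨h1, h2⟩; exact ⟨hS2 t h1, h1, h2⟩
      · rintro ⟨_, h1, h2⟩; exact ⟨h1, h2⟩
    rw [r1, r2, r3, r4, Finset.prod_filter, Finset.prod_filter, Finset.prod_filter, Finset.prod_filter,
      ← Finset.prod_mul_distrib, ← Finset.prod_mul_distrib, ← Finset.prod_mul_distrib]
    apply Finset.prod_congr rfl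
    intro t ht
    simp only [Finset.mem_Icc] at ht
    have htq : (2:ℚ) ≤ t := by exact_mod_cast ht.1
    have d1 : 2*(t:ℚ) - 3 ≠ 0 := by linarith
    have d2 : 2*(t:ℚ) - 1 ≠ 0 := by linarith
    have d3 : 2*(t:ℚ) - 2 ≠ 0 := by linarith
    have d4 : (t:ℚ) - 1 ≠ 0 := by linarith
    unfold fac
    by_cases hts : t ∈ S
    · obtain ⟨q, hq, hqm, rfl⟩ := (hmemS t).1 hts
      have k1 := hgt q hq hqm
      have k2 := hle q hq
      by_cases hta : x q ≤ a
      · rw [if_pos hts, if_pos ⟨k1, hta⟩, if_neg (by omega), if_pos ⟨hts, hta⟩, if_neg (by tauto)]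
        field_simp
      · rw [if_pos hts, if_neg (by omega), if_pos (by omega), if_neg (by tauto), if_pos ⟨hts, hta⟩]
        field_simp
    · rw [if_neg hts, if_neg (fun h : t ∈ S ∧ t ≤ a => hts h.1), if_neg (fun h : t ∈ S ∧ ¬ t ≤ a => hts h.1)]
      rcases le_or_gt t c with h | h
      · rw [hK1 t h, if_neg (by omega), if_neg (by omega)]
        push_cast; field_simp; ring
      rcases le_or_gt t a with h' | h'
      · rw [hK2 t h h', if_pos ⟨h, h'⟩, if_neg (by omega)]
        push_cast; field_simp; ring
      rcases le_or_gt t b with h'' | h''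
      · rw [hK3 t h' h'', if_neg (by omega), if_pos ⟨h', h''⟩]
        push_cast; field_simp; ring
      · rw [hK4 t h'', if_neg (by omega), if_neg (by omega)]
        push_cast; field_simp; ring
  rw [hfac, telescope c a hc1 hca]
  have hSR : S.filter (fun t => ¬ t ≤ a) = insert b R := by
    ext t
    simp only [Finset.mem_filter, hmemS, Finset.mem_insert, hR, Finset.mem_image, Finset.mem_Ioo]
    constructor
    · rintro ⟨⟨q, hq, hqm, rfl⟩, h⟩
      have k2 := hle q hq
      by_cases hqb : x q = b
      · exact Or.inl hqb
      · refine Or.inr ⟨q, ⟨⟨?_, ?_⟩, by omega, by omega⟩, rfl⟩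
        · by_contra h'
          have : q = 0 := by omega
          subst this
          omega
        · by_contra h'
          have : q = p := by omega
          subst this
          omega
    · rintro (rfl | ⟨q, ⟨⟨h1, h2⟩, h3, h4⟩, rfl⟩)
      · refine ⟨?_, by omega⟩
        rcases le_total (x 0) (x p) with h | h
        · refine ⟨p, le_rfl, ?_, by omega⟩
          rintro rfl; omega
        · refine ⟨0, by omega, ?_, by omega⟩
          rintro rfl; omega
      · refine ⟨⟨q, by omega, ?_, rfl⟩, by omega⟩
        rintro rfl; omega
  have hbR : b ∉ R := by
    simp only [hR, Finset.mem_image, Finset.mem_filter]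
    rintro ⟨q, ⟨_, h1, h2⟩, h3⟩
    omega
  rw [hSR, Finset.prod_insert hbR]
  have hτinj : ∀ v, ∀ q < p, ∀ q' < p, x (τ q) = v → x (τ q') = v → (v ≠ c ∨ m = 0 ∨ m = p) → q = q' := by
    intro v q hq q' hq' h1 h2 h3
    have := inj _ (hτp q hq) _ (hτp q' hq') (h1.trans h2.symm)
    have hne : τ q = m → m = 0 ∨ m = p := by
      intro h
      rw [h, ← hc] at h1
      rcases h3 with h3 | h3
      · exact absurd h1.symm h3
      · exact h3
    simp only [hτ] at this hne
    split_ifs at this hne <;> omega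
  have hone : ∀ v, (v ≠ c ∨ m = 0 ∨ m = p) → (((S.filter (fun s => g s = v)).card.factorial : ℕ) : ℚ) = 1 := by
    intro v hv
    rw [hcard (fun s u => u = v)]
    have : ((Finset.range p).filter (fun q => x (τ q) = v)).card ≤ 1 := by
      rw [Finset.card_le_one]
      intro q hq q' hq'
      simp only [Finset.mem_filter, Finset.mem_range] at hq hq'
      exact hτinj v q hq.1 q' hq'.1 hq.2 hq'.2 hv
    rw [Nat.factorial_eq_one.2 this, Nat.cast_one]
  by_cases hac : a = c
  · have hm0 : m = 0 ∨ m = p := by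
      rcases le_total (x 0) (x p) with h | h
      · left; exact (inj 0 (by omega) m hm (by omega)).symm
      · right; exact (inj p le_rfl m hm (by omega)).symm
    rw [if_pos hac, Finset.prod_eq_one (fun v _ => hone v (Or.inr hm0))]
    have e1 : S.filter (fun t => t ≤ a) = ∅ := by
      rw [Finset.filter_eq_empty_iff]
      intro s hs
      obtain ⟨q, hq, hqm, rfl⟩ := (hmemS s).1 hs
      have := hgt q hq hqm
      omega
    have e2 : L = ∅ := by
      rw [hL, Finset.image_eq_empty, Finset.filter_eq_empty_iff]
      intro q _
      omega
    rw [e1, e2]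
    simp only [Finset.prod_empty]
    ring
  · have hm0 : 0 < m := by
      by_contra h
      have : m = 0 := by omega
      subst this
      have := hge p le_rfl
      omega
    have hmp : m < p := by
      by_contra h
      have : m = p := by omega
      subst this
      have := hge 0 (by omega)
      omega
    have e1 : S.filter (fun t => t ≤ a) = insert a L := by
      ext t
      simp only [Finset.mem_filter, hmemS, Finset.mem_insert, hL, Finset.mem_image, Finset.mem_Ioo]
      constructor
      · rintro ⟨⟨q, hq, hqm, rfl⟩, h⟩
        have k2 := hgt q hq hqm
        by_cases hqb : x q = a
        · exact Or.inl hqb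
        · refine Or.inr ⟨q, ⟨⟨?_, ?_⟩, by omega, by omega⟩, rfl⟩
          · by_contra h'
            have : q = 0 := by omega
            subst this
            omega
          · by_contra h'
            have : q = p := by omega
            subst this
            omega
      · rintro (rfl | ⟨q, ⟨⟨h1, h2⟩, h3, h4⟩, rfl⟩)
        · refine ⟨?_, le_rfl⟩
          rcases le_total (x 0) (x p) with h | h
          · exact ⟨0, by omega, by omega, by omega⟩
          · exact ⟨p, le_rfl, by omega, by omega⟩
        · refine ⟨⟨q, by omega, ?_, rfl⟩, by omega⟩
          rintro rfl; omega
    have haL : a ∉ L := by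
      simp only [hL, Finset.mem_image, Finset.mem_filter]
      rintro ⟨q, ⟨_, h1, h2⟩, h3⟩
      omega
    have e2 : ∏ v ∈ Finset.Icc 1 n, (((S.filter (fun s => g s = v)).card.factorial : ℕ) : ℚ) = 2 := by
      rw [Finset.prod_eq_single c (fun v _ hv => hone v (Or.inl hv))]
      · rw [hcard (fun s u => u = c)]
        have : (Finset.range p).filter (fun q => x (τ q) = c) = {m - 1, m} := by
          ext q
          simp only [Finset.mem_filter, Finset.mem_range, Finset.mem_insert, Finset.mem_singleton]
          constructor
          · rintro ⟨hq, h⟩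
            have := inj _ (hτp q hq) m hm (h.trans hc)
            simp only [hτ] at this
            split_ifs at this <;> omega
          · intro h
            refine ⟨by omega, ?_⟩
            rw [hc]
            congr 1
            simp only [hτ]
            split_ifs <;> omega
        rw [this, Finset.card_pair (by omega)]
        norm_num
      · intro h
        exact absurd (Finset.mem_Icc.2 ⟨hc1, by omega⟩) h
    rw [if_neg hac, e1, Finset.prod_insert haL, e2]
    ring

end PAux

/-- Bollobás–Riordan formula: the probability, under the scale-free random tree
distribution on `{1, …, n}`, that a given valley-shaped sequence of distinct vertices
`x_0, x_1, …, x_p` (strictly decreasing to `x_m = c`, then strictly increasing) forms a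
path in `T_n^f`, expressed in terms of `a = min(x_0, x_p)`, `b = max(x_0, x_p)`,
`c = x_m`, `L = {x_q : 0 < q < p, c < x_q < a}` and `R = {x_q : 0 < q < p, a < x_q < b}`. -/
theorem path_probability_formula (n p : ℕ) (hn : 2 ≤ n) (hp : 1 ≤ p)
    (x : ℕ → ℕ) (hrange : ∀ q ≤ p, 1 ≤ x q ∧ x q ≤ n)
    (hdistinct : ∀ q ≤ p, ∀ q' ≤ p, q ≠ q' → x q ≠ x q')
    (m : ℕ) (hm : m ≤ p)
    (hdec : ∀ q, q < m → x (q+1) < x q)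
    (hinc : ∀ q, m ≤ q → q < p → x q < x (q+1))
    (a b c : ℕ) (ha : a = min (x 0) (x p)) (hb : b = max (x 0) (x p)) (hc : c = x m)
    (L R : Finset ℕ)
    (hL : L = ((Finset.Ioo 0 p).filter (fun q => c < x q ∧ x q < a)).image x)
    (hR : R = ((Finset.Ioo 0 p).filter (fun q => a < x q ∧ x q < b)).image x) :
    (a ≠ c →
      ∑ f ∈ Finset.univ.filter (fun f : Fin (n+1) → Fin (n+1) => ValidPF n f ∧
          ∀ q < p, fext n f (max (x q) (x (q+1))) = min (x q) (x (q+1))),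
        probPF n f
      = (2 / (2*(c : ℚ) - 1)) * (1 / (2*(b : ℚ) - 2)) *
        (∏ i ∈ L, 1 / (2*(i : ℚ) - 1)) * (∏ i ∈ R, 1 / (2*(i : ℚ) - 2)) *
        (∏ t ∈ Finset.Icc (a+1) b, (2*(t : ℚ) - 2) / (2*(t : ℚ) - 3))) ∧
    (a = c →
      ∑ f ∈ Finset.univ.filter (fun f : Fin (n+1) → Fin (n+1) => ValidPF n f ∧
          ∀ q < p, fext n f (max (x q) (x (q+1))) = min (x q) (x (q+1))),
        probPF n f
      = (1 / (2*(b : ℚ) - 2)) * (∏ i ∈ R, 1 / (2*(i : ℚ) - 2)) *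
        (∏ t ∈ Finset.Icc (a+1) b, (2*(t : ℚ) - 2) / (2*(t : ℚ) - 3))) := by
  have key := PAux.path_main n p hn hp x hrange hdistinct m hm hdec hinc a b c ha hb hc L R hL hR
  have hx0 := (hrange 0 (by omega)).1
  have hxp := (hrange p le_rfl).1
  have hxm := (hrange m hm).1
  have ha1 : (1:ℚ) ≤ a := by exact_mod_cast (by omega : 1 ≤ a)
  have hne : 2 * (a:ℚ) - 1 ≠ 0 := by linarith
  constructor
  · intro hac
    rw [key, if_neg hac, mul_assoc (2:ℚ), one_div_mul_eq_div, div_div_cancel_left' hne]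
    ring
  · intro hac
    have hL0 : L = ∅ := by
      rw [hL, Finset.image_eq_empty, Finset.filter_eq_empty_iff]
      intro q _
      omega
    rw [key, if_pos hac, hL0, ← hac, div_self hne]
    simp only [Finset.prod_empty]
    ring

end
end
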